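/- arXiv:2311.03868 — 2 statements merged into one kernel-verified Lean document; each statement's English description precedes it below -/
import Mathlib

section
/- Let (J,B,π) be a standard Borel probability space and ψ(P) = E_{u∼π}(1/|P_u|) (with 1/|P_u| = 0 for infinite classes). If P, Q, R are B-partitions with the re-randomizing property such that R refines both P and Q, then ψ(R) + ψ(P∨Q) ≥ ψ(P) + ψ(Q). -/
open MeasureTheory

/-- The class of the partition (setoid) `s` containing `x`. -/
def Setoid.cls {J : Type*} (s : Setoid J) (x : J) : Set J := {y | s.r x y}

/-- The saturation of a set `A`: the union of all classes of `s` meeting `A`. -/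
def Setoid.sat {J : Type*} (s : Setoid J) (A : Set J) : Set J := {x | ∃ y ∈ A, s.r x y}

/-- A partition is a `B`-partition if the saturation of every Borel (measurable) set
is Borel (measurable). -/
def IsBPartition {J : Type*} [MeasurableSpace J] (s : Setoid J) : Prop :=
  ∀ A : Set J, MeasurableSet A → MeasurableSet (s.sat A)

open scoped Classical

/-- The probability that, picking a `π`-random point and re-randomizing it along `s`
(i.e. replacing it by a uniform random point of its class when that class is finite,
keeping it otherwise), the resulting point lies in `A`. -/
noncomputable def rerandProb {J : Type*} [MeasurableSpace J] (s : Setoid J)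
    (π : MeasureTheory.Measure J) (A : Set J) : ℝ :=
  ∫ x, (if (s.cls x).Finite then (Nat.card ↥(s.cls x ∩ A) : ℝ) / (Nat.card ↥(s.cls x))
        else A.indicator 1 x) ∂π

/-- A partition `s` has the re-randomizing property with respect to `π` if re-randomizing
a `π`-random point along `s` again yields a point distributed according to `π`. -/
def HasRerand {J : Type*} [MeasurableSpace J] (s : Setoid J)
    (π : MeasureTheory.Measure J) : Prop :=
  ∀ A : Set J, MeasurableSet A → rerandProb s π A = (π A).toReal

/-- `ψ(P) = E_{u∼π}(1/|P_u|)`, with the convention `1/|P_u| = 0` for infinite classes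
(note `Nat.card` of an infinite set is `0`, and `1/0 = 0` in `ℝ`). -/
noncomputable def psi {J : Type*} [MeasurableSpace J] (s : Setoid J)
    (π : MeasureTheory.Measure J) : ℝ :=
  ∫ x, (1 : ℝ) / (Nat.card ↥(s.cls x)) ∂π

section

open scoped ENNReal

variable {J : Type*}

/-- The number of points of `A` in the class of `x`. -/
noncomputable def Setoid.count (s : Setoid J) (A : Set J) (x : J) : ℕ∞ := (s.cls x ∩ A).encard

lemma Set.Finite.exists_rat_between {α : Type*} {t : Set α} (ht : t.Finite) (e : α → ℝ) (b : ℝ)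
    (h : ∀ y ∈ t, e y < b) : ∃ q : ℚ, (∀ y ∈ t, e y < q) ∧ (q : ℝ) < b := by
  induction t, ht using Set.Finite.induction_on with
  | empty => obtain ⟨q, hq⟩ := exists_rat_lt b; exact ⟨q, by simp, hq⟩
  | @insert a t _ _ ih =>
    obtain ⟨q, hq, hqb⟩ := ih fun y hy => h y (Set.mem_insert_of_mem _ hy)
    obtain ⟨r, har, hrb⟩ := exists_rat_btwn (h a (Set.mem_insert _ _))
    refine ⟨max q r, ?_, by simp [hqb, hrb]⟩
    rintro y (rfl | hy)
    · simp [har]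
    · simp [hq y hy]

lemma Set.add_one_le_encard_iff_exists_rat {α : Type*} {e : α → ℝ} (he : Function.Injective e)
    (S : Set α) (k : ℕ) :
    ((k + 1 : ℕ) : ℕ∞) ≤ S.encard ↔
      ∃ q : ℚ, (k : ℕ∞) ≤ (S ∩ {y | e y < q}).encard ∧ (S ∩ {y | (q : ℝ) ≤ e y}).Nonempty := by
  constructor
  · intro h
    obtain ⟨t, htS, htk⟩ := Set.exists_subset_encard_eq h
    have htf : t.Finite := Set.finite_of_encard_eq_coe htk
    have htn : t.Nonempty := by
      rw [← Set.one_le_encard_iff_nonempty, htk]; simp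
    obtain ⟨x, hx, hmax⟩ := Set.exists_max_image t e htf htn
    have hlt : ∀ y ∈ t \ {x}, e y < e x := fun y hy =>
      lt_of_le_of_ne (hmax y hy.1) fun h => hy.2 (he h)
    obtain ⟨q, hq, hqx⟩ := (htf.subset Set.sdiff_subset).exists_rat_between e (e x) hlt
    refine ⟨q, ?_, x, htS hx, hqx.le⟩
    have h1 : (t \ {x}).encard + 1 = (k : ℕ∞) + 1 := by
      rw [Set.encard_sdiff_singleton_add_one hx, htk]; simp
    have h2 : (t \ {x}).encard = k := by
      exact ENat.add_left_injective_of_ne_top ENat.one_ne_top h1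
    rw [← h2]
    exact Set.encard_le_encard fun y hy => ⟨htS hy.1, hq y hy⟩
  · rintro ⟨q, hk, hne⟩
    have hd : Disjoint (S ∩ {y | e y < q}) (S ∩ {y | (q : ℝ) ≤ e y}) :=
      Set.disjoint_left.2 fun y hy hy' => (not_lt.2 (Set.mem_ofPred.1 hy'.2)) hy.2
    calc ((k + 1 : ℕ) : ℕ∞) = k + 1 := by simp
      _ ≤ (S ∩ {y | e y < q}).encard + (S ∩ {y | (q : ℝ) ≤ e y}).encard :=
          add_le_add hk (Set.one_le_encard_iff_nonempty.2 hne)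
      _ = _ := (Set.encard_union_eq hd).symm
      _ ≤ _ := Set.encard_le_encard (Set.union_subset Set.inter_subset_left Set.inter_subset_left)

lemma Setoid.mem_sat_iff {s : Setoid J} {A : Set J} {x : J} :
    x ∈ s.sat A ↔ (s.cls x ∩ A).Nonempty := by
  constructor
  · rintro ⟨y, hy, h⟩; exact ⟨y, h, hy⟩
  · rintro ⟨y, h, hy⟩; exact ⟨y, hy, h⟩

/-- The reciprocal of the size of the class of `x`, which is `0` for infinite classes. -/
noncomputable def Setoid.wt (s : Setoid J) (x : J) : ℝ≥0∞ := (s.count Set.univ x : ℝ≥0∞)⁻¹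

lemma Setoid.one_le_count_iff {s : Setoid J} {A : Set J} {x : J} :
    1 ≤ s.count A x ↔ x ∈ s.sat A := by
  rw [Setoid.mem_sat_iff, Setoid.count, Set.one_le_encard_iff_nonempty]

lemma Setoid.count_mono {s : Setoid J} {A B : Set J} (h : A ⊆ B) (x : J) :
    s.count A x ≤ s.count B x :=
  Set.encard_le_encard (Set.inter_subset_inter_right _ h)

lemma Setoid.cls_eq {s : Setoid J} {x y : J} (h : s x y) : s.cls x = s.cls y := by
  ext z
  exact ⟨fun hz => s.trans (s.symm h) hz, fun hz => s.trans h hz⟩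

lemma Setoid.count_eq {s : Setoid J} {x y : J} (h : s x y) (A : Set J) :
    s.count A x = s.count A y := by
  rw [Setoid.count, Setoid.cls_eq h, Setoid.count]

lemma Setoid.one_le_count_univ (s : Setoid J) (x : J) : 1 ≤ s.count Set.univ x :=
  Setoid.one_le_count_iff.2 ⟨x, Set.mem_univ x, s.refl x⟩

lemma Setoid.wt_le_one (s : Setoid J) (x : J) : s.wt x ≤ 1 := by
  rw [Setoid.wt, ENNReal.inv_le_one]
  exact_mod_cast s.one_le_count_univ x

lemma Setoid.count_mul_wt_le_one (s : Setoid J) (A : Set J) (x : J) :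
    (s.count A x : ℝ≥0∞) * s.wt x ≤ 1 := by
  rw [Setoid.wt, ← div_eq_mul_inv]
  refine ENNReal.div_le_of_le_mul ?_
  rw [one_mul]
  exact_mod_cast Setoid.count_mono (Set.subset_univ A) x

lemma Setoid.count_toReal (s : Setoid J) (A : Set J) (x : J) :
    (s.count A x : ℝ≥0∞).toReal = Nat.card ↥(s.cls x ∩ A) := by
  rw [Setoid.count, Nat.card_coe_set_eq, Set.ncard]
  cases h : (s.cls x ∩ A).encard <;> simp

lemma Setoid.wt_toReal (s : Setoid J) (x : J) :
    (s.wt x).toReal = 1 / (Nat.card ↥(s.cls x) : ℝ) := by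
  rw [Setoid.wt, ENNReal.toReal_inv, Setoid.count_toReal, Set.inter_univ, one_div]

/-- Starting from the `P`-saturation of `A`, saturate `n` times along `Q` and then `P`. -/
def Setoid.altSat (P Q : Setoid J) (A : Set J) : ℕ → Set J
  | 0 => P.sat A
  | n + 1 => P.sat (Q.sat (Setoid.altSat P Q A n))

lemma Setoid.subset_sat (s : Setoid J) (A : Set J) : A ⊆ s.sat A := fun x hx => ⟨x, hx, s.refl x⟩

lemma Setoid.mem_sat_of_rel {s r : Setoid J} (hrs : r ≤ s) {A : Set J} {x y : J} (h : r x y)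
    (hx : x ∈ s.sat A) : y ∈ s.sat A := by
  obtain ⟨z, hz, hxz⟩ := hx
  exact ⟨z, hz, s.trans (s.symm (hrs h)) hxz⟩

lemma Setoid.altSat_mem_of_rel {P Q r : Setoid J} (hrP : r ≤ P) {A : Set J} {n : ℕ} {x y : J}
    (h : r x y) (hx : x ∈ P.altSat Q A n) : y ∈ P.altSat Q A n := by
  cases n <;> exact Setoid.mem_sat_of_rel hrP h hx

lemma Setoid.monotone_altSat (P Q : Setoid J) (A : Set J) : Monotone (P.altSat Q A) :=
  monotone_nat_of_le_succ fun _ => (Q.subset_sat _).trans (P.subset_sat _)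

lemma Setoid.sat_altSat_subset (P Q : Setoid J) (A : Set J) {m n : ℕ} (h : m < n) :
    Q.sat (P.altSat Q A m) ⊆ P.altSat Q A n :=
  (P.subset_sat _).trans (P.monotone_altSat Q A (Nat.succ_le_of_lt h))

lemma Setoid.sat_mono (s : Setoid J) {A B : Set J} (h : A ⊆ B) : s.sat A ⊆ s.sat B :=
  fun _ ⟨y, hy, hxy⟩ => ⟨y, h hy, hxy⟩

lemma Setoid.sat_sup_eq_iUnion (P Q : Setoid J) (A : Set J) :
    (P ⊔ Q).sat A = ⋃ n, P.altSat Q A n := by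
  apply Set.Subset.antisymm
  · rintro x ⟨y, hy, hxy⟩
    have hle : P ⊔ Q ≤ Setoid.ker fun z => z ∈ ⋃ n, P.altSat Q A n := by
      have key : ∀ s : Setoid J,
          (∀ a b, s a b → a ∈ ⋃ n, P.altSat Q A n → b ∈ ⋃ n, P.altSat Q A n) →
          s ≤ Setoid.ker fun z => z ∈ ⋃ n, P.altSat Q A n := fun s hs a b hab =>
        propext ⟨hs a b hab, hs b a (s.symm hab)⟩
      refine sup_le (key P fun a b hab ha => ?_) (key Q fun a b hab ha => ?_)
      · obtain ⟨n, hn⟩ := Set.mem_iUnion.1 ha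
        exact Set.mem_iUnion.2 ⟨n, Setoid.altSat_mem_of_rel le_rfl hab hn⟩
      · obtain ⟨n, hn⟩ := Set.mem_iUnion.1 ha
        exact Set.mem_iUnion.2 ⟨n + 1, P.sat_altSat_subset Q A n.lt_succ_self
          ⟨a, hn, Q.symm hab⟩⟩
    have h : (x ∈ ⋃ n, P.altSat Q A n) = (y ∈ ⋃ n, P.altSat Q A n) := hle hxy
    rw [h]
    exact Set.mem_iUnion.2 ⟨0, P.subset_sat A hy⟩
  · refine Set.iUnion_subset fun n => ?_
    have hP : P ≤ P ⊔ Q := le_sup_left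
    have hQ : Q ≤ P ⊔ Q := le_sup_right
    induction n with
    | zero => exact fun x ⟨y, hy, hxy⟩ => ⟨y, hy, hP hxy⟩
    | succ n ih =>
      rintro x ⟨y, ⟨z, hz, hyz⟩, hxy⟩
      obtain ⟨w, hw, hzw⟩ := ih hz
      exact ⟨w, hw, (P ⊔ Q).trans (hP hxy) ((P ⊔ Q).trans (hQ hyz) hzw)⟩

lemma Set.exists_encard_lt_eq {α : Type*} {e : α → ℝ} (he : Function.Injective e) {S : Set α}
    {n k : ℕ} (hS : S.encard = n) (hk : k < n) :
    ∃ v ∈ S, (S ∩ {y | e y < e v}).encard = k := by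
  have hf : S.Finite := Set.finite_of_encard_eq_coe hS
  lift S to Finset α using hf
  rw [Set.encard_coe_eq_coe_finsetCard] at hS
  have hS : S.card = n := by exact_mod_cast hS
  have hlt : ∀ v ∈ S, ∀ w ∈ S, e v < e w →
      (S.filter fun y => e y < e v).card < (S.filter fun y => e y < e w).card := by
    intro v hv w hw hvw
    refine Finset.card_lt_card ⟨?_, fun h => ?_⟩
    · intro y hy
      simp only [Finset.mem_filter] at hy ⊢
      exact ⟨hy.1, hy.2.trans hvw⟩
    · simpa using h (Finset.mem_filter.2 ⟨hv, hvw⟩)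
  have himage : S.image (fun v => (S.filter fun y => e y < e v).card) = Finset.range n := by
    refine Finset.eq_of_subset_of_card_le (fun j hj => ?_) ?_
    · obtain ⟨v, hv, rfl⟩ := Finset.mem_image.1 hj
      rw [Finset.mem_range, ← hS]
      exact Finset.card_lt_card (Finset.filter_ssubset.2 ⟨v, hv, lt_irrefl _⟩)
    · rw [Finset.card_range, Finset.card_image_of_injOn, hS]
      intro v hv w hw hvw
      by_contra hne
      rcases lt_or_gt_of_ne fun h => hne (he h) with h | h
      · exact (hlt v hv w hw h).ne hvw
      · exact (hlt w hw v hv h).ne' hvw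
  obtain ⟨v, hv, hvk⟩ := Finset.mem_image.1 (himage ▸ Finset.mem_range.2 hk)
  refine ⟨v, hv, ?_⟩
  have : (S : Set α) ∩ {y | e y < e v} = ↑(S.filter fun y => e y < e v) := by
    ext y; simp
  rw [this, Set.encard_coe_eq_coe_finsetCard, hvk]

variable [MeasurableSpace J]

lemma exists_injective_bounded (J : Type*) [MeasurableSpace J] [StandardBorelSpace J] :
    ∃ e : J → ℝ, Measurable e ∧ Function.Injective e ∧ ∃ a b, ∀ x, a ≤ e x ∧ e x < b := by
  obtain ⟨f, hf⟩ := MeasureTheory.exists_measurableEmbedding_real J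
  exact ⟨fun x => Real.arctan (f x), Real.continuous_arctan.measurable.comp hf.measurable,
    Real.arctan_strictMono.injective.comp hf.injective, _, _, fun x =>
      ⟨(Real.neg_pi_div_two_lt_arctan _).le, Real.arctan_lt_pi_div_two _⟩⟩

lemma IsBPartition.measurableSet_le_count {s : Setoid J} (hs : IsBPartition s) {e : J → ℝ}
    (hem : Measurable e) (he : Function.Injective e) (k : ℕ) :
    ∀ {A : Set J}, MeasurableSet A → MeasurableSet {x | (k : ℕ∞) ≤ s.count A x} := by
  induction k with
  | zero => intro A _; simp
  | succ k ih =>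
    intro A hA
    have : {x | ((k + 1 : ℕ) : ℕ∞) ≤ s.count A x} =
        ⋃ q : ℚ, {x | (k : ℕ∞) ≤ s.count (A ∩ {y | e y < q}) x} ∩
          s.sat (A ∩ {y | (q : ℝ) ≤ e y}) := by
      ext x
      simp only [Set.mem_ofPred_eq, Set.mem_iUnion, Set.mem_inter_iff, Setoid.mem_sat_iff,
        Setoid.count, Set.add_one_le_encard_iff_exists_rat he, ← Set.inter_assoc]
    rw [this]
    refine MeasurableSet.iUnion fun q => (ih (hA.inter ?_)).inter (hs _ (hA.inter ?_))
    · exact measurableSet_lt hem measurable_const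
    · exact measurableSet_le measurable_const hem

lemma IsBPartition.measurable_count [StandardBorelSpace J] {s : Setoid J} (hs : IsBPartition s)
    {A : Set J} (hA : MeasurableSet A) : Measurable (s.count A) := by
  obtain ⟨e, hem, he, -⟩ := exists_injective_bounded J
  have h : ∀ n : ℕ∞, MeasurableSet (s.count A ⁻¹' Set.Ici n) := by
    intro n
    induction n with
    | top =>
      have : s.count A ⁻¹' Set.Ici ⊤ = ⋂ k : ℕ, {x | (k : ℕ∞) ≤ s.count A x} := by
        ext x
        simp [ENat.eq_top_iff_forall_ge]
      rw [this]
      exact MeasurableSet.iInter fun k => hs.measurableSet_le_count hem he k hA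
    | coe k => exact hs.measurableSet_le_count hem he k hA
  refine measurable_to_countable' fun n => ?_
  have : s.count A ⁻¹' {n} = (s.count A ⁻¹' Set.Ici n) \
      ⋃ m : Set.Ioi n, s.count A ⁻¹' Set.Ici m := by
    ext x
    simp only [Set.mem_preimage, Set.mem_singleton_iff, Set.mem_sdiff, Set.mem_Ici, Set.mem_iUnion]
    refine ⟨fun h => ⟨h.ge, ?_⟩, fun ⟨h1, h2⟩ => ?_⟩
    · rintro ⟨m, hm⟩
      exact absurd (hm.trans h.le) (not_le.2 m.2)
    · by_contra hne
      exact h2 ⟨⟨_, lt_of_le_of_ne h1 (Ne.symm hne)⟩, le_rfl⟩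
  rw [this]
  exact (h n).diff (MeasurableSet.iUnion fun m => h m)

lemma IsBPartition.measurable_wt [StandardBorelSpace J] {s : Setoid J} (hs : IsBPartition s) :
    Measurable s.wt :=
  ((measurable_from_top (f := ((↑) : ℕ∞ → ℝ≥0∞))).comp (hs.measurable_count .univ)).inv

lemma lintegral_wt_ne_top (s : Setoid J) (π : Measure J) [IsProbabilityMeasure π] :
    ∫⁻ x, s.wt x ∂π ≠ ⊤ := by
  refine ne_top_of_le_ne_top ENNReal.one_ne_top ((lintegral_mono s.wt_le_one).trans ?_)
  simp

lemma psi_eq_toReal_lintegral [StandardBorelSpace J] {s : Setoid J} (hs : IsBPartition s)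
    (π : Measure J) : psi s π = (∫⁻ x, s.wt x ∂π).toReal := by
  rw [psi, ← integral_toReal hs.measurable_wt.aemeasurable
    (.of_forall fun x => (s.wt_le_one x).trans_lt ENNReal.one_lt_top)]
  simp only [Setoid.wt_toReal]

lemma HasRerand.lintegral_count_mul_wt [StandardBorelSpace J] {s : Setoid J} {π : Measure J}
    [IsProbabilityMeasure π] (hre : HasRerand s π) (hs : IsBPartition s) {B : Set J}
    (hB : MeasurableSet B) (hfin : ∀ x ∈ B, s.count Set.univ x ≠ ⊤) :
    ∫⁻ x, (s.count B x : ℝ≥0∞) * s.wt x ∂π = π B := by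
  have hm : Measurable fun x => (s.count B x : ℝ≥0∞) * s.wt x :=
    ((measurable_from_top (f := ((↑) : ℕ∞ → ℝ≥0∞))).comp (hs.measurable_count hB)).mul
      hs.measurable_wt
  have htop : ∫⁻ x, (s.count B x : ℝ≥0∞) * s.wt x ∂π ≠ ⊤ := by
    refine ne_top_of_le_ne_top ENNReal.one_ne_top
      ((lintegral_mono (s.count_mul_wt_le_one B)).trans ?_)
    simp
  rw [← ENNReal.toReal_eq_toReal_iff' htop (measure_ne_top π B), ← hre B hB, rerandProb,
    ← integral_toReal hm.aemeasurable
    (.of_forall fun x => (s.count_mul_wt_le_one B x).trans_lt ENNReal.one_lt_top)]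
  congr 1 with x
  rw [ENNReal.toReal_mul, Setoid.count_toReal, Setoid.wt_toReal, mul_one_div]
  split_ifs with h
  · rfl
  · have hx : x ∉ B := fun hx => h <| by
      simpa [Setoid.count] using hfin x hx
    have : Infinite ↥(s.cls x) := Set.infinite_coe_iff.2 h
    simp [hx]

lemma HasRerand.setLIntegral_sat_wt_le_measure [StandardBorelSpace J] {s : Setoid J} {π : Measure J}
    [IsProbabilityMeasure π] (hre : HasRerand s π) (hs : IsBPartition s) {A : Set J}
    (hA : MeasurableSet A) : ∫⁻ x in s.sat A, s.wt x ∂π ≤ π A := by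
  have hF : MeasurableSet {x | s.count Set.univ x ≠ ⊤} :=
    hs.measurable_count .univ (.of_discrete (s := {⊤}ᶜ))
  calc ∫⁻ x in s.sat A, s.wt x ∂π
      ≤ ∫⁻ x, (s.count (A ∩ {x | s.count Set.univ x ≠ ⊤}) x : ℝ≥0∞) * s.wt x ∂π := by
        rw [← lintegral_indicator (hs A hA)]
        refine lintegral_mono (Set.indicator_le fun x hx => ?_)
        by_cases hx' : s.count Set.univ x = ⊤
        · simp [Setoid.wt, hx']
        · refine le_mul_of_one_le_left' ?_
          obtain ⟨y, hy, hxy⟩ := hx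
          have : 1 ≤ s.count (A ∩ {x | s.count Set.univ x ≠ ⊤}) x :=
            Setoid.one_le_count_iff.2 ⟨y, ⟨hy, by
              rw [Set.mem_ofPred_eq, ← Setoid.count_eq hxy]; exact hx'⟩, hxy⟩
          exact_mod_cast this
    _ = π (A ∩ {x | s.count Set.univ x ≠ ⊤}) :=
        hre.lintegral_count_mul_wt hs (hA.inter hF) fun x hx => hx.2
    _ ≤ π A := measure_mono Set.inter_subset_left

lemma HasRerand.setLIntegral_sat_wt_le [StandardBorelSpace J] {s r : Setoid J} {π : Measure J}
    [IsProbabilityMeasure π] (hre : HasRerand s π) (hs : IsBPartition s) (hrs : r ≤ s)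
    {D : Set J} (hD : MeasurableSet D) (hinv : ∀ x ∈ D, ∀ y, r x y → y ∈ D) :
    ∫⁻ x in s.sat D, s.wt x ∂π ≤ ∫⁻ x in D, r.wt x ∂π := by
  set Y : ℕ → Set J := fun j => {x | s.count D x = ((j + 1 : ℕ) : ℕ∞) ∧ s.count Set.univ x ≠ ⊤}
  have hY : ∀ j, MeasurableSet (Y j) := fun j =>
    (hs.measurable_count hD (.of_discrete (s := {((j + 1 : ℕ) : ℕ∞)}))).inter
      (hs.measurable_count .univ (.of_discrete (s := {⊤}ᶜ)))
  have hYd : Pairwise (Function.onFun Disjoint fun j => D ∩ Y j) := fun i j hij =>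
    Set.disjoint_left.2 fun x hi hj => hij (by simpa using hi.2.1.symm.trans hj.2.1)
  have hpiece : ∀ j, ∫⁻ x in Y j, s.wt x ∂π ≤ ∫⁻ x in D ∩ Y j, r.wt x ∂π := by
    intro j
    have hcount : ∀ x ∈ Y j, s.count (D ∩ Y j) x = ((j + 1 : ℕ) : ℕ∞) := by
      intro x hx
      rw [← hx.1, Setoid.count, Setoid.count]
      congr 1
      ext y
      refine ⟨fun hy => ⟨hy.1, hy.2.1⟩, fun hy => ⟨hy.1, hy.2, ?_⟩⟩
      have hxy : s x y := hy.1
      exact ⟨by rw [← Setoid.count_eq hxy]; exact hx.1, by rw [← Setoid.count_eq hxy]; exact hx.2⟩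
    have h0 : ((j + 1 : ℕ) : ℝ≥0∞) ≠ 0 := by simp
    have h1 : ((j + 1 : ℕ) : ℝ≥0∞) ≠ ⊤ := ENNReal.natCast_ne_top _
    calc ∫⁻ x in Y j, s.wt x ∂π
        = ((j + 1 : ℕ) : ℝ≥0∞)⁻¹ * ∫⁻ x in Y j, (s.count (D ∩ Y j) x : ℝ≥0∞) * s.wt x ∂π := by
          rw [setLIntegral_congr_fun (f := fun x => (s.count (D ∩ Y j) x : ℝ≥0∞) * s.wt x)
            (g := fun x => ((j + 1 : ℕ) : ℝ≥0∞) * s.wt x) (hY j)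
            fun x hx => by simp only [hcount x hx, ENat.toENNReal_coe],
            lintegral_const_mul _ hs.measurable_wt, ← mul_assoc, ENNReal.inv_mul_cancel h0 h1,
            one_mul]
      _ ≤ ((j + 1 : ℕ) : ℝ≥0∞)⁻¹ * ∫⁻ x, (s.count (D ∩ Y j) x : ℝ≥0∞) * s.wt x ∂π := by
          gcongr; exact Measure.restrict_le_self
      _ = ((j + 1 : ℕ) : ℝ≥0∞)⁻¹ * π (D ∩ Y j) := by
          rw [hre.lintegral_count_mul_wt hs (hD.inter (hY j)) fun x hx => hx.2.2]
      _ = ∫⁻ x in D ∩ Y j, ((j + 1 : ℕ) : ℝ≥0∞)⁻¹ ∂π := by rw [setLIntegral_const]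
      _ ≤ ∫⁻ x in D ∩ Y j, r.wt x ∂π := by
          refine setLIntegral_mono' (hD.inter (hY j)) fun x hx => ?_
          rw [Setoid.wt, ENNReal.inv_le_inv, ← ENat.toENNReal_coe, ← hx.2.1, ENat.toENNReal_le]
          exact Set.encard_le_encard fun y hy => ⟨hrs hy.1, hinv x hx.1 y hy.1⟩
  calc ∫⁻ x in s.sat D, s.wt x ∂π ≤ ∫⁻ x in ⋃ j, Y j, s.wt x ∂π := by
        rw [← lintegral_indicator (hs D hD), ← lintegral_indicator (.iUnion hY)]
        refine lintegral_mono (Set.indicator_le fun x hx => ?_)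
        by_cases hx' : s.count Set.univ x = ⊤
        · simp [Setoid.wt, hx']
        · have hle : s.count D x ≠ ⊤ :=
            ne_top_of_le_ne_top hx' (Setoid.count_mono (Set.subset_univ D) x)
          obtain ⟨n, hn⟩ := ENat.ne_top_iff_exists.1 hle
          have h1 := Setoid.one_le_count_iff.2 hx
          rw [← hn] at h1
          have h1 : 1 ≤ n := by exact_mod_cast h1
          rw [Set.indicator_of_mem]
          refine Set.mem_iUnion.2 ⟨n - 1, ?_, hx'⟩
          rw [← hn, Nat.sub_add_cancel h1]
    _ ≤ ∑' j, ∫⁻ x in Y j, s.wt x ∂π := lintegral_iUnion_le _ _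
    _ ≤ ∑' j, ∫⁻ x in D ∩ Y j, r.wt x ∂π := ENNReal.tsum_le_tsum hpiece
    _ = ∫⁻ x in ⋃ j, D ∩ Y j, r.wt x ∂π := (lintegral_iUnion (fun j => hD.inter (hY j)) hYd _).symm
    _ ≤ ∫⁻ x in D, r.wt x ∂π :=
        lintegral_mono_set (Set.iUnion_subset fun j => Set.inter_subset_left)

lemma IsBPartition.measurableSet_altSat {P Q : Setoid J} (hP : IsBPartition P)
    (hQ : IsBPartition Q) {A : Set J} (hA : MeasurableSet A) (n : ℕ) :
    MeasurableSet (P.altSat Q A n) := by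
  induction n with
  | zero => exact hP A hA
  | succ n ih => exact hP _ (hQ _ ih)

lemma IsBPartition.sup {P Q : Setoid J} (hP : IsBPartition P) (hQ : IsBPartition Q) :
    IsBPartition (P ⊔ Q) := fun A hA => by
  rw [Setoid.sat_sup_eq_iUnion]
  exact .iUnion fun n => hP.measurableSet_altSat hQ hA n

lemma setLIntegral_wt_add_le [StandardBorelSpace J] {P Q R : Setoid J} {π : Measure J}
    [IsProbabilityMeasure π] (hP : IsBPartition P) (hQ : IsBPartition Q)
    (hreP : HasRerand P π) (hreQ : HasRerand Q π) (hRP : R ≤ P) (hRQ : R ≤ Q)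
    {A : Set J} (hA : MeasurableSet A) :
    ∫⁻ x in (P ⊔ Q).sat A, P.wt x ∂π + ∫⁻ x in (P ⊔ Q).sat A, Q.wt x ∂π ≤
      ∫⁻ x in (P ⊔ Q).sat A, R.wt x ∂π + π A := by
  set U := P.altSat Q A
  set V := fun n => Q.sat (U n)
  have hUm : ∀ n, MeasurableSet (U n) := hP.measurableSet_altSat hQ hA
  have hVm : ∀ n, MeasurableSet (V n) := fun n => hQ _ (hUm n)
  have hUmono : Monotone U := P.monotone_altSat Q A
  have hVmono : Monotone V := fun m n h => Q.sat_mono (hUmono h)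
  have hUV : ∀ n, U n ⊆ V n := fun n => Q.subset_sat _
  have hVU : ∀ {m n}, m < n → V m ⊆ U n := P.sat_altSat_subset Q A
  have hUinv : ∀ n x y, R x y → x ∈ U n → y ∈ U n := fun n x y h =>
    Setoid.altSat_mem_of_rel hRP h
  have hVinv : ∀ n x y, R x y → x ∈ V n → y ∈ V n := fun n x y h => Setoid.mem_sat_of_rel hRQ h
  have hX : (P ⊔ Q).sat A = ⋃ n, U n := P.sat_sup_eq_iUnion Q A
  set X := (P ⊔ Q).sat A
  set O := ⋃ n, V n \ U n
  set E := ⋃ n, U n \ ⋃ m : Set.Iio n, V m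
  have hOm : MeasurableSet O := .iUnion fun n => (hVm n).diff (hUm n)
  have hEm : MeasurableSet E := .iUnion fun n => (hUm n).diff (.iUnion fun m => hVm m)
  have hOinv : ∀ x ∈ O, ∀ y, R x y → y ∈ O := by
    intro x hx y hxy
    obtain ⟨n, hx1, hx2⟩ := Set.mem_iUnion.1 hx
    exact Set.mem_iUnion.2 ⟨n, hVinv n x y hxy hx1, fun h => hx2 (hUinv n y x (R.symm hxy) h)⟩
  have hEinv : ∀ x ∈ E, ∀ y, R x y → y ∈ E := by
    intro x hx y hxy
    obtain ⟨n, hx1, hx2⟩ := Set.mem_iUnion.1 hx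
    refine Set.mem_iUnion.2 ⟨n, hUinv n x y hxy hx1, fun h => hx2 ?_⟩
    obtain ⟨m, hm⟩ := Set.mem_iUnion.1 h
    exact Set.mem_iUnion.2 ⟨m, hVinv m y x (R.symm hxy) hm⟩
  have hOE : Disjoint E O := by
    refine Set.disjoint_left.2 fun x hxE hxO => ?_
    obtain ⟨m, hm1, hm2⟩ := Set.mem_iUnion.1 hxE
    obtain ⟨n, hn1, hn2⟩ := Set.mem_iUnion.1 hxO
    rcases le_or_gt m n with h | h
    · exact hn2 (hUmono h hm1)
    · exact hm2 (Set.mem_iUnion.2 ⟨⟨n, h⟩, hn1⟩)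
  have hEX : E ⊆ X := by
    rw [hX]; exact Set.iUnion_mono fun n => Set.sdiff_subset
  have hOX : O ⊆ X := by
    rw [hX]
    exact Set.iUnion_subset fun n => Set.sdiff_subset.trans <|
      (hVU n.lt_succ_self).trans (Set.subset_iUnion U (n + 1))
  have hXQ : X ⊆ Q.sat E := by
    intro x hx
    have hex : ∃ n, x ∈ V n := by
      obtain ⟨n, hn⟩ := Set.mem_iUnion.1 (hX ▸ hx)
      exact ⟨n, hUV n hn⟩
    obtain ⟨y, hy, hxy⟩ := Nat.find_spec hex
    refine ⟨y, Set.mem_iUnion.2 ⟨_, hy, fun h => ?_⟩, hxy⟩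
    obtain ⟨m, hm⟩ := Set.mem_iUnion.1 h
    exact Nat.find_min hex m.2 (Setoid.mem_sat_of_rel le_rfl (Q.symm hxy) hm)
  have hXP : X ⊆ P.sat A ∪ P.sat O := by
    intro x hx
    have hex : ∃ n, x ∈ U n := Set.mem_iUnion.1 (hX ▸ hx)
    have hspec := Nat.find_spec hex
    have hmin := fun m => Nat.find_min hex (m := m)
    generalize Nat.find hex = n at hspec hmin
    cases n with
    | zero => exact Or.inl hspec
    | succ k =>
      obtain ⟨y, hy, hxy⟩ := hspec
      refine Or.inr ⟨y, Set.mem_iUnion.2 ⟨k, hy, fun h => ?_⟩, hxy⟩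
      exact hmin k k.lt_succ_self (Setoid.altSat_mem_of_rel le_rfl (P.symm hxy) h)
  calc ∫⁻ x in X, P.wt x ∂π + ∫⁻ x in X, Q.wt x ∂π
      ≤ (∫⁻ x in P.sat A, P.wt x ∂π + ∫⁻ x in P.sat O, P.wt x ∂π) +
          ∫⁻ x in Q.sat E, Q.wt x ∂π := by
        gcongr
        exact (lintegral_mono_set hXP).trans (lintegral_union_le _ _ _)
    _ ≤ (π A + ∫⁻ x in O, R.wt x ∂π) + ∫⁻ x in E, R.wt x ∂π := by
        exact add_le_add (add_le_add (hreP.setLIntegral_sat_wt_le_measure hP hA)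
          (hreP.setLIntegral_sat_wt_le hP hRP hOm hOinv))
          (hreQ.setLIntegral_sat_wt_le hQ hRQ hEm hEinv)
    _ = ∫⁻ x in E ∪ O, R.wt x ∂π + π A := by
        rw [lintegral_union hOm hOE]; ring
    _ ≤ ∫⁻ x in X, R.wt x ∂π + π A := by
        gcongr; exact Set.union_subset hEX hOX

/-- Infinite classes admit a vanishing sequence of measurable markers. -/
lemma IsBPartition.exists_vanishing_markers [StandardBorelSpace J] {s : Setoid J}
    (hs : IsBPartition s) : ∃ A : ℕ → Set J, (∀ n, MeasurableSet (A n)) ∧ Antitone A ∧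
      ⋂ n, A n = ∅ ∧ ∀ n, s.sat (A n) = {x | s.count Set.univ x = ⊤} := by
  obtain ⟨e, hem, he, a, b, hab⟩ := exists_injective_bounded J
  set S : J → Set ℝ := fun x => {c | c = b ∨ s.count (e ⁻¹' Set.Iio c) x = ⊤} with hS
  set m : J → ℝ := fun x => sInf (S x) with hm
  have hne : ∀ x, (S x).Nonempty := fun x => ⟨b, Or.inl rfl⟩
  have hbdd : ∀ x, BddBelow (S x) := by
    refine fun x => ⟨a, ?_⟩
    rintro c (rfl | hc)
    · exact ((hab x).1.trans_lt (hab x).2).le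
    · by_contra hlt
      have : e ⁻¹' Set.Iio c = ∅ := by
        ext y
        simpa using ((not_le.1 hlt).trans_le (hab y).1).le
      simp [this, Setoid.count] at hc
  have hcount : ∀ {c : ℝ}, MeasurableSet {x | s.count (e ⁻¹' Set.Iio c) x = ⊤} := fun {c} =>
    hs.measurable_count (hem measurableSet_Iio) (.of_discrete (s := {⊤}))
  have hmono : ∀ {c d : ℝ} {x}, c ≤ d → s.count (e ⁻¹' Set.Iio c) x = ⊤ →
      s.count (e ⁻¹' Set.Iio d) x = ⊤ := fun h hc => top_le_iff.1 <|
    hc.symm.le.trans (Setoid.count_mono (Set.preimage_mono (Set.Iio_subset_Iio h)) _)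
  have hmm : Measurable m := by
    refine measurable_of_Iio fun c => ?_
    have : m ⁻¹' Set.Iio c =
        {_x | b < c} ∪
          ⋃ q : {q : ℚ // (q : ℝ) < c}, {x | s.count (e ⁻¹' Set.Iio (q : ℝ)) x = ⊤} := by
      ext x
      simp only [Set.mem_preimage, Set.mem_Iio, Set.mem_union, Set.mem_iUnion, Set.mem_ofPred_eq]
      rw [hm, csInf_lt_iff (hbdd x) (hne x)]
      constructor
      · rintro ⟨d, rfl | hd, hdc⟩
        · exact Or.inl hdc
        · obtain ⟨q, hdq, hqc⟩ := exists_rat_btwn hdc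
          exact Or.inr ⟨⟨q, hqc⟩, hmono hdq.le hd⟩
      · rintro (h | ⟨q, hq⟩)
        · exact ⟨b, Or.inl rfl, h⟩
        · exact ⟨q, Or.inr hq, q.2⟩
    rw [this]
    exact (MeasurableSet.const _).union (.iUnion fun q => hcount)
  have hminv : ∀ {x y}, s x y → m x = m y := fun {x y} h => by
    simp only [hm, hS, Setoid.count_eq h]
  refine ⟨fun n => {v | s.count Set.univ v = ⊤ ∧ 0 < |e v - m v| ∧ |e v - m v| ≤ 1 / ((n : ℝ) + 1)},
    fun n => ?_, fun i j hij v hv => ⟨hv.1, hv.2.1, hv.2.2.trans ?_⟩, ?_, fun n => ?_⟩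
  · have h1 : MeasurableSet {x | s.count Set.univ x = ⊤} :=
      hs.measurable_count .univ (.of_discrete (s := {⊤}))
    have h2 : Measurable fun v => |e v - m v| := (hem.sub hmm).abs
    exact h1.inter ((measurableSet_lt measurable_const h2).inter
      (measurableSet_le h2 measurable_const))
  · exact one_div_le_one_div_of_le (by positivity) (by gcongr)
  · refine Set.eq_empty_of_forall_notMem fun v hv => ?_
    have hv := Set.mem_iInter.1 hv
    obtain ⟨n, hn⟩ := exists_nat_one_div_lt (hv 0).2.1
    exact absurd (hv n).2.2 (not_le.2 hn)
  · ext x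
    constructor
    · rintro ⟨y, hy, hxy⟩
      exact (Setoid.count_eq hxy _).trans hy.1
    · intro hx
      have hx : s.count Set.univ x = ⊤ := hx
      set ε : ℝ := 1 / ((n : ℝ) + 1)
      have hε0 : 0 < ε := by positivity
      have hlow : (s.cls x ∩ e ⁻¹' Set.Iio (m x - ε)).Finite := by
        rw [← Set.encard_ne_top_iff]
        intro h
        have := csInf_le (hbdd x) (Or.inr h : m x - ε ∈ S x)
        change m x ≤ _ at this
        linarith
      have hhigh : (s.cls x ∩ e ⁻¹' Set.Iio (m x + ε)).Infinite := by
        rw [← Set.encard_eq_top_iff]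
        obtain ⟨c, hc, hlt⟩ := exists_lt_of_csInf_lt (hne x) (show sInf (S x) < m x + ε by
          change m x < m x + ε; linarith)
        rcases hc with rfl | hc
        · refine hmono hlt.le ?_
          have : e ⁻¹' Set.Iio c = Set.univ := Set.eq_univ_of_forall fun y => (hab y).2
          rw [this, hx]
        · exact hmono hlt.le hc
      have hmid : {y | e y = m x}.Finite :=
        Set.Subsingleton.finite fun y hy z hz =>
          he ((Set.mem_ofPred.1 hy).trans (Set.mem_ofPred.1 hz).symm)
      obtain ⟨y, hy, hy'⟩ := (hhigh.sdiff (hlow.union hmid)).nonempty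
      have hxy : s x y := hy.1
      have hlt : e y < m x + ε := hy.2
      have hne : e y ≠ m x := fun h => hy' (Or.inr h)
      have hge : m x - ε ≤ e y := not_lt.1 fun h => hy' (Or.inl ⟨hy.1, h⟩)
      refine ⟨y, ⟨(Setoid.count_eq hxy _).symm.trans hx, ?_⟩, hxy⟩
      rw [← hminv hxy]
      exact ⟨abs_pos.2 (sub_ne_zero.2 hne), abs_le.2 ⟨by linarith, by linarith⟩⟩

/-- The classes of size `n` admit `n` disjoint measurable transversals. -/
lemma IsBPartition.exists_transversals [StandardBorelSpace J] {s : Setoid J}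
    (hs : IsBPartition s) (n : ℕ) : ∃ A : Fin n → Set J, (∀ k, MeasurableSet (A k)) ∧
      Pairwise (Function.onFun Disjoint A) ∧
      ∀ k, s.sat (A k) = {x | s.count Set.univ x = n} := by
  obtain ⟨e, hem, he, -⟩ := exists_injective_bounded J
  have hle : ∀ j : ℕ, MeasurableSet {v | (j : ℕ∞) ≤ s.count {y | e y < e v} v} := by
    intro j
    have : {v | (j : ℕ∞) ≤ s.count {y | e y < e v} v} =
        ⋃ q : ℚ, {v | (q : ℝ) ≤ e v} ∩ {v | (j : ℕ∞) ≤ s.count {y | e y < q} v} := by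
      ext v
      simp only [Set.mem_ofPred_eq, Set.mem_iUnion, Set.mem_inter_iff]
      constructor
      · intro h
        obtain ⟨t, hts, htj⟩ := Set.exists_subset_encard_eq h
        obtain ⟨q, hq, hqv⟩ := (Set.finite_of_encard_eq_coe htj).exists_rat_between e (e v)
          fun y hy => (hts hy).2
        refine ⟨q, hqv.le, ?_⟩
        rw [← htj]
        exact Set.encard_le_encard fun y hy => ⟨(hts hy).1, hq y hy⟩
      · rintro ⟨q, hqv, h⟩
        refine h.trans (Setoid.count_mono (fun y hy => ?_) v)
        exact lt_of_lt_of_le (Set.mem_ofPred.1 hy) hqv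
    rw [this]
    exact .iUnion fun q => (measurableSet_le measurable_const hem).inter
      (hs.measurableSet_le_count hem he j (measurableSet_lt hem measurable_const))
  refine ⟨fun k => {v | s.count Set.univ v = n} ∩ {v | s.count {y | e y < e v} v = (k : ℕ)},
    fun k => ?_, fun i j hij => ?_, fun k => ?_⟩
  · refine MeasurableSet.inter
      (hs.measurable_count .univ (.of_discrete (s := {(n : ℕ∞)}))) ?_
    have : {v | s.count {y | e y < e v} v = (k : ℕ)} =
        {v | ((k : ℕ) : ℕ∞) ≤ s.count {y | e y < e v} v} \
          {v | (((k : ℕ) + 1 : ℕ) : ℕ∞) ≤ s.count {y | e y < e v} v} := by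
      ext v
      simp only [Set.mem_ofPred_eq, Set.mem_sdiff]
      cases s.count {y | e y < e v} v with
      | top => simp
      | coe c => norm_cast; omega
    rw [this]
    exact (hle _).diff (hle _)
  · refine Set.disjoint_left.2 fun v hi hj => hij (Fin.ext ?_)
    have h : (((i : ℕ) : ℕ∞)) = (j : ℕ) := (Set.mem_ofPred.1 hi.2).symm.trans hj.2
    exact_mod_cast h
  · ext x
    constructor
    · rintro ⟨y, hy, hxy⟩
      exact (Setoid.count_eq hxy _).trans hy.1
    · intro hx
      have hx : s.count Set.univ x = n := hx
      have hx' : (s.cls x).encard = n := by rw [← hx, Setoid.count, Set.inter_univ]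
      obtain ⟨v, hv, hvk⟩ := Set.exists_encard_lt_eq he hx' k.2
      have hxv : s x v := hv
      refine ⟨v, ⟨(Setoid.count_eq hxv _).symm.trans hx, ?_⟩, hxv⟩
      exact (Setoid.count_eq hxv _).symm.trans hvk

lemma setLIntegral_wt_add_le_of_count_eq [StandardBorelSpace J] {P Q R : Setoid J} {π : Measure J}
    [IsProbabilityMeasure π] (hP : IsBPartition P) (hQ : IsBPartition Q)
    (hreP : HasRerand P π) (hreQ : HasRerand Q π) (hRP : R ≤ P) (hRQ : R ≤ Q) (n : ℕ∞) :
    ∫⁻ x in {x | (P ⊔ Q).count Set.univ x = n}, P.wt x ∂π +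
      ∫⁻ x in {x | (P ⊔ Q).count Set.univ x = n}, Q.wt x ∂π ≤
      ∫⁻ x in {x | (P ⊔ Q).count Set.univ x = n}, R.wt x ∂π +
      ∫⁻ x in {x | (P ⊔ Q).count Set.univ x = n}, (P ⊔ Q).wt x ∂π := by
  have hC := hP.sup hQ
  have hXm : MeasurableSet {x | (P ⊔ Q).count Set.univ x = n} :=
    hC.measurable_count .univ (.of_discrete (s := {n}))
  have key := fun {A : Set J} (hA : MeasurableSet A) =>
    setLIntegral_wt_add_le (π := π) hP hQ hreP hreQ hRP hRQ hA
  cases n with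
  | top =>
    obtain ⟨A, hAm, hanti, hinter, hsat⟩ := hC.exists_vanishing_markers
    refine le_add_right ?_
    have hlim : Filter.Tendsto (fun n => π (A n)) Filter.atTop (nhds 0) := by
      have := tendsto_measure_iInter_atTop (μ := π) (fun n => (hAm n).nullMeasurableSet) hanti
        ⟨0, measure_ne_top _ _⟩
      rwa [hinter, measure_empty] at this
    refine ge_of_tendsto' (f := fun n => _ + π (A n)) (x := Filter.atTop) ?_
      fun n => hsat n ▸ key (hAm n)
    have := hlim.const_add (∫⁻ x in {x | (P ⊔ Q).count Set.univ x = ⊤}, R.wt x ∂π)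
    simpa using this
  | coe n =>
    obtain ⟨A, hAm, hdisj, hsat⟩ := hC.exists_transversals n
    set X := {x | (P ⊔ Q).count Set.univ x = n}
    rcases Nat.eq_zero_or_pos n with rfl | hn
    · have : X = ∅ := Set.eq_empty_of_forall_notMem fun x hx => by
        have h := (P ⊔ Q).one_le_count_univ x
        rw [Set.mem_ofPred.1 hx] at h
        simp at h
      simp [this]
    · have hsum : (n : ℝ≥0∞) * (∫⁻ x in X, P.wt x ∂π + ∫⁻ x in X, Q.wt x ∂π) ≤
          n * ∫⁻ x in X, R.wt x ∂π + π X := by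
        calc (n : ℝ≥0∞) * (∫⁻ x in X, P.wt x ∂π + ∫⁻ x in X, Q.wt x ∂π)
            = ∑ _k : Fin n, (∫⁻ x in X, P.wt x ∂π + ∫⁻ x in X, Q.wt x ∂π) := by
              rw [Finset.sum_const, Finset.card_univ, Fintype.card_fin, nsmul_eq_mul]
          _ ≤ ∑ k : Fin n, (∫⁻ x in X, R.wt x ∂π + π (A k)) :=
              Finset.sum_le_sum fun k _ => hsat k ▸ key (hAm k)
          _ = n * ∫⁻ x in X, R.wt x ∂π + π (⋃ k, A k) := by
              rw [Finset.sum_add_distrib, measure_iUnion hdisj hAm, tsum_fintype]; simp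
          _ ≤ _ := by
              gcongr
              exact Set.iUnion_subset fun k => hsat k ▸ (P ⊔ Q).subset_sat _
      have hn0 : (n : ℝ≥0∞) ≠ 0 := by simpa using hn.ne'
      have hnt : (n : ℝ≥0∞) ≠ ⊤ := ENNReal.natCast_ne_top n
      have hwt : ∫⁻ x in X, (P ⊔ Q).wt x ∂π = (n : ℝ≥0∞)⁻¹ * π X := by
        rw [← setLIntegral_const]
        refine setLIntegral_congr_fun hXm fun x hx => ?_
        rw [Setoid.wt, Set.mem_ofPred.1 hx, ENat.toENNReal_coe]
      rw [← ENNReal.mul_le_mul_iff_right hn0 hnt, mul_add _ (∫⁻ x in X, R.wt x ∂π), hwt,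
        ← mul_assoc, ENNReal.mul_inv_cancel hn0 hnt, one_mul]
      exact hsum

lemma lintegral_wt_add_le [StandardBorelSpace J] {P Q R : Setoid J} {π : Measure J}
    [IsProbabilityMeasure π] (hP : IsBPartition P) (hQ : IsBPartition Q)
    (hreP : HasRerand P π) (hreQ : HasRerand Q π) (hRP : R ≤ P) (hRQ : R ≤ Q) :
    ∫⁻ x, P.wt x ∂π + ∫⁻ x, Q.wt x ∂π ≤ ∫⁻ x, R.wt x ∂π + ∫⁻ x, (P ⊔ Q).wt x ∂π := by
  have hXm : ∀ n : ℕ∞, MeasurableSet {x | (P ⊔ Q).count Set.univ x = n} := fun n =>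
    (hP.sup hQ).measurable_count .univ (.of_discrete (s := {n}))
  have hsplit : ∀ f : J → ℝ≥0∞,
      ∫⁻ x, f x ∂π = ∑' n : ℕ∞, ∫⁻ x in {x | (P ⊔ Q).count Set.univ x = n}, f x ∂π := by
    intro f
    rw [← lintegral_iUnion hXm fun i j hij => Set.disjoint_left.2 fun x hi hj =>
      hij ((Set.mem_ofPred.1 hi).symm.trans hj), ← setLIntegral_univ]
    congr 2
    ext x; simp
  simp only [hsplit, ← ENNReal.tsum_add]
  exact ENNReal.tsum_le_tsum (setLIntegral_wt_add_le_of_count_eq hP hQ hreP hreQ hRP hRQ)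

end

/-- If `P`, `Q`, `R` are `B`-partitions of a standard Borel probability
space with the re-randomizing property and `R` refines both `P` and `Q`, then
`ψ(R) + ψ(P ∨ Q) ≥ ψ(P) + ψ(Q)`. -/
theorem psi_supermodular {J : Type*} [MeasurableSpace J] [StandardBorelSpace J]
    (π : MeasureTheory.Measure J) [IsProbabilityMeasure π]
    (P Q R : Setoid J) (hP : IsBPartition P) (hQ : IsBPartition Q) (hR : IsBPartition R)
    (hreP : HasRerand P π) (hreQ : HasRerand Q π) (hreR : HasRerand R π)
    (hRP : R ≤ P) (hRQ : R ≤ Q) :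
    psi P π + psi Q π ≤ psi R π + psi (P ⊔ Q) π := by
  have hC := hP.sup hQ
  rw [psi_eq_toReal_lintegral hP, psi_eq_toReal_lintegral hQ, psi_eq_toReal_lintegral hR,
    psi_eq_toReal_lintegral hC, ← ENNReal.toReal_add (lintegral_wt_ne_top P π)
    (lintegral_wt_ne_top Q π), ← ENNReal.toReal_add (lintegral_wt_ne_top R π)
    (lintegral_wt_ne_top _ π)]
  exact ENNReal.toReal_mono
    (ENNReal.add_ne_top.2 ⟨lintegral_wt_ne_top R π, lintegral_wt_ne_top _ π⟩)
    (lintegral_wt_add_le hP hQ hreP hreQ hRP hRQ)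
end

section
/- Let G = (J,B,E,λ) be a hyperfinite graphing in which every connected component is a tree. Then for every Borel set U ⊆ E, ρ(U) = (d̄/2)·η(U), where ρ is the normalized rank, d̄ the average degree, and η the edge measure. In particular ρ restricted to Borel subsets of E is a measure and ρ(E) = d̄/2. -/
open MeasureTheory

/-- A graphing: a bounded-degree Borel graph `(J, E)` on a standard Borel space together
with a probability measure `μ` satisfying the measure-preservation (intrinsic
mass-transport) equation `∫_A deg_B = ∫_B deg_A`. -/
structure Graphing (J : Type*) [MeasurableSpace J] where
  /-- the (symmetric) adjacency relation -/
  E : J → J → Prop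
  symm : ∀ x y, E x y → E y x
  measE : MeasurableSet {p : J × J | E p.1 p.2}
  /-- the underlying probability measure -/
  μ : Measure J
  prob : IsProbabilityMeasure μ
  /-- the degree bound -/
  D : ℕ
  degFin : ∀ x, {y | E x y}.Finite
  degBound : ∀ x, ({y | E x y}).ncard ≤ D
  mp : ∀ A B : Set J, MeasurableSet A → MeasurableSet B →
    ∫ x in A, (({y ∈ B | E x y}).ncard : ℝ) ∂μ = ∫ x in B, (({y ∈ A | E x y}).ncard : ℝ) ∂μ

namespace Graphing

variable {J : Type*} [MeasurableSpace J]

/-- The edge set of a graphing, as a (symmetric) set of ordered pairs. -/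
def edgeSet (G : Graphing J) : Set (J × J) := {p | G.E p.1 p.2}

/-- A Borel symmetric subset of the edge set of `G`. -/
def IsEdgeSubset (G : Graphing J) (X : Set (J × J)) : Prop :=
  MeasurableSet X ∧ (∀ x y, (x, y) ∈ X → (y, x) ∈ X) ∧ X ⊆ G.edgeSet

/-- The vertex set of the connected component of `x` in the graph with edge set `X`. -/
def compo (X : Set (J × J)) (x : J) : Set J :=
  {y | Relation.ReflTransGen (fun a b => (a, b) ∈ X) x y}

/-- The number of edges of `X` incident with `x`. -/
noncomputable def degX (X : Set (J × J)) (x : J) : ℕ := ({y | (x, y) ∈ X}).ncard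

/-- The average degree `d̄` of a graphing. -/
noncomputable def avgDeg (G : Graphing J) : ℝ := ∫ x, (({y | G.E x y}).ncard : ℝ) ∂G.μ

/-- The edge measure `η` of a graphing: `η(X) = (1/d̄) ∫ deg_X dμ`. -/
noncomputable def eta (G : Graphing J) (X : Set (J × J)) : ℝ :=
  (∫ x, (degX X x : ℝ) ∂G.μ) / G.avgDeg

/-- The normalized rank `ρ(X) = 1 − E_u(1/|V(G^X_u)|)` of a Borel edge set `X`, with the
convention `1/|V| = 0` for infinite components (`Nat.card` of an infinite set is `0`). -/
noncomputable def rho (G : Graphing J) (X : Set (J × J)) : ℝ :=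
  1 - ∫ x, (1 : ℝ) / (Nat.card ↥(compo X x)) ∂G.μ

/-- A graphing is hyperfinite if edge sets of arbitrarily small edge measure can be
removed so that only finite connected components remain. -/
def Hyperfinite (G : Graphing J) : Prop :=
  ∀ ε : ℝ, 0 < ε → ∃ X : Set (J × J), G.IsEdgeSubset X ∧ G.eta X < ε ∧
    ∀ x : J, (compo (G.edgeSet \ X) x).Finite

/-- A set of edges is a forest if for every edge `(a,b)` there is no path from `a` to `b`
avoiding that edge; equivalently, the graph it spans has no cycles. -/
def IsForestSet (X : Set (J × J)) : Prop :=
  ∀ a b : J, (a, b) ∈ X →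
    ¬ Relation.ReflTransGen
        (fun u v => (u, v) ∈ X ∧ ¬((u = a ∧ v = b) ∨ (u = b ∧ v = a))) a b

/-- A graphing is a forest (all components are trees) if its edge set is a forest. -/
def IsForest (G : Graphing J) : Prop := IsForestSet G.edgeSet

end Graphing

open scoped ENNReal

namespace Graphing

open Set Filter ProbabilityTheory

universe u

/-- A Borel set with uniformly finite vertical sections has Borel section-counting function;
in particular its projection is Borel. -/
theorem measurable_count_section {Y : Type u} [MeasurableSpace Y] [StandardBorelSpace Y] (n : ℕ) :
    ∀ {X : Type u} [MeasurableSpace X] [StandardBorelSpace X] {U : Set (X × Y)},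
      MeasurableSet U → (∀ x, (Prod.mk x ⁻¹' U).encard ≤ n) →
      Measurable fun x => Measure.count (Prod.mk x ⁻¹' U) := by
  obtain ⟨e, he⟩ := exists_measurableEmbedding_real Y
  induction n with
  | zero =>
    intro X _ _ U _ hn
    have h (x : X) : Prod.mk x ⁻¹' U = ∅ := by simpa using hn x
    simp [h]
  | succ n ih =>
    intro X _ _ U hU hn
    let V : Set ((X × Y) × Y) := {q | q.1 ∈ U ∧ (q.1.1, q.2) ∈ U ∧ e q.1.2 < e q.2}
    have hV : MeasurableSet V := by
      refine (measurable_fst hU).inter (MeasurableSet.inter ?_ ?_)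
      · exact (measurable_fst.fst.prodMk measurable_snd) hU
      · exact measurableSet_lt (he.measurable.comp measurable_fst.snd)
          (he.measurable.comp measurable_snd)
    have hVn (q : X × Y) : (Prod.mk q ⁻¹' V).encard ≤ n := by
      by_cases hq : q ∈ U
      · have h1 : (Prod.mk q ⁻¹' V) ⊆ (Prod.mk q.1 ⁻¹' U) \ {q.2} := by
          rintro z ⟨-, hz, hlt⟩
          refine ⟨hz, ?_⟩
          rintro rfl
          exact lt_irrefl _ hlt
        refine (encard_le_encard h1).trans ?_
        rw [encard_sdiff_singleton_of_mem (by simpa using hq)]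
        refine tsub_le_iff_right.2 ((hn q.1).trans (by simp))
      · have : Prod.mk q ⁻¹' V = ∅ := by
          ext z; simp [V, hq]
        simp [this]
    let U' : Set (X × Y) := {q | Measure.count (Prod.mk q ⁻¹' V) ≠ 0}
    have hU' : MeasurableSet U' := (ih hV hVn) (measurableSet_singleton 0).compl
    have hmem (q : X × Y) : q ∈ U' ↔ q ∈ U ∧ ∃ z, (q.1, z) ∈ U ∧ e q.2 < e z := by
      simp only [U', mem_ofPred_eq, Measure.count_ne_zero_iff]
      constructor
      · rintro ⟨z, h1, h2, h3⟩
        exact ⟨h1, z, h2, h3⟩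
      · rintro ⟨h1, z, h2, h3⟩
        exact ⟨z, h1, h2, h3⟩
    have hfin (x : X) : (Prod.mk x ⁻¹' U).Finite :=
      finite_of_encard_le_coe (hn x)
    have hmax (x : X) (hx : (Prod.mk x ⁻¹' U).Nonempty) : ∃ y, (x, y) ∈ U \ U' := by
      obtain ⟨y, hy, hy'⟩ := exists_max_image _ e (hfin x) hx
      refine ⟨y, hy, fun h => ?_⟩
      obtain ⟨-, z, hz, hlt⟩ := (hmem _).1 h
      exact absurd (hy' z hz) (not_le.2 hlt)
    have hU'n (x : X) : (Prod.mk x ⁻¹' U').encard ≤ n := by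
      by_cases hx : (Prod.mk x ⁻¹' U).Nonempty
      · obtain ⟨y, hy, hy'⟩ := hmax x hx
        have h1 : (Prod.mk x ⁻¹' U') ⊆ (Prod.mk x ⁻¹' U) \ {y} := by
          intro z hz
          refine ⟨((hmem _).1 hz).1, ?_⟩
          rintro rfl
          exact hy' hz
        refine (encard_le_encard h1).trans ?_
        rw [encard_sdiff_singleton_of_mem (by simpa using hy)]
        exact tsub_le_iff_right.2 ((hn x).trans (by simp))
      · have : Prod.mk x ⁻¹' U' = ∅ := by
          refine eq_empty_of_forall_notMem fun z hz => hx ⟨z, ((hmem _).1 hz).1⟩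
        simp [this]
    have hinj : InjOn Prod.fst (U \ U') := by
      rintro ⟨x, y⟩ ⟨hy, hy'⟩ ⟨x', z⟩ ⟨hz, hz'⟩ (rfl : x = x')
      have h1 : ¬ e y < e z := fun h => hy' ((hmem _).2 ⟨hy, z, hz, h⟩)
      have h2 : ¬ e z < e y := fun h => hz' ((hmem _).2 ⟨hz, y, hy, h⟩)
      rw [he.injective (le_antisymm (not_lt.1 h2) (not_lt.1 h1))]
    have hproj : MeasurableSet (Prod.fst '' (U \ U')) :=
      (hU.diff hU').image_of_measurable_injOn measurable_fst hinj
    have hcount : (fun x => Measure.count (Prod.mk x ⁻¹' U)) = fun x =>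
        Measure.count (Prod.mk x ⁻¹' U') + (Prod.fst '' (U \ U')).indicator 1 x := by
      funext x
      have hsplit : Prod.mk x ⁻¹' U = Prod.mk x ⁻¹' U' ∪ Prod.mk x ⁻¹' (U \ U') := by
        rw [← preimage_union, union_sdiff_cancel fun q hq => ((hmem q).1 hq).1]
      have hdisj : Disjoint (Prod.mk x ⁻¹' U') (Prod.mk x ⁻¹' (U \ U')) :=
        disjoint_sdiff_right.preimage _
      rw [hsplit, measure_union hdisj (measurable_prodMk_left (hU.diff hU'))]
      congr 1
      by_cases hx : x ∈ Prod.fst '' (U \ U')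
      · obtain ⟨⟨x', y⟩, hy, rfl : x' = x⟩ := id hx
        have : Prod.mk x' ⁻¹' (U \ U') = {y} := by
          ext z
          simp only [mem_preimage, mem_singleton_iff]
          constructor
          · intro hz
            exact congrArg Prod.snd (hinj hz hy rfl)
          · rintro rfl
            exact hy
        rw [this, indicator_of_mem hx, Measure.count_singleton, Pi.one_apply]
      · have : Prod.mk x ⁻¹' (U \ U') = ∅ :=
          eq_empty_of_forall_notMem fun z hz => hx ⟨(x, z), hz, rfl⟩
        rw [this, indicator_of_notMem hx, measure_empty]
    rw [hcount]
    exact (ih hU' hU'n).add (measurable_one.indicator hproj)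

theorem measurableSet_exists_of_encard_le {X Y : Type u} [MeasurableSpace X]
    [StandardBorelSpace X] [MeasurableSpace Y] [StandardBorelSpace Y] {n : ℕ} {U : Set (X × Y)}
    (hU : MeasurableSet U) (hn : ∀ x, (Prod.mk x ⁻¹' U).encard ≤ n) :
    MeasurableSet {x | ∃ y, (x, y) ∈ U} := by
  have h : {x | ∃ y, (x, y) ∈ U} = (fun x => Measure.count (Prod.mk x ⁻¹' U)) ⁻¹' {0}ᶜ := by
    ext x
    simp only [mem_preimage, mem_compl_iff, mem_singleton_iff, ← ne_eq, Measure.count_ne_zero_iff]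
    rfl
  rw [h]
  exact measurable_count_section n hU hn (measurableSet_singleton 0).compl

section Components

variable {P J : Type u}

/-- Pairs `(p, v)` such that `v` is within `k` steps of `s p` in the graph `T p`. -/
def reach (T : Set (P × J × J)) (s : P → J) : ℕ → Set (P × J)
  | 0 => {q | s q.1 = q.2}
  | k + 1 => reach T s k ∪ {q | ∃ u, (q.1, u) ∈ reach T s k ∧ (q.1, u, q.2) ∈ T}

theorem reach_mono (T : Set (P × J × J)) (s : P → J) : Monotone (reach T s) :=
  monotone_nat_of_le_succ fun _ => subset_union_left

theorem iUnion_reach (T : Set (P × J × J)) (s : P → J) (p : P) :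
    ⋃ k, Prod.mk p ⁻¹' reach T s k = compo (Prod.mk p ⁻¹' T) (s p) := by
  apply subset_antisymm
  · refine iUnion_subset fun k => ?_
    induction k with
    | zero =>
      rintro v (rfl : s p = v)
      exact Relation.ReflTransGen.refl
    | succ k ih =>
      rintro v (hv | ⟨u, hu, huv⟩)
      · exact ih hv
      · exact Relation.ReflTransGen.tail (ih hu) huv
  · intro v hv
    simp only [mem_iUnion]
    change Relation.ReflTransGen _ _ _ at hv
    induction hv with
    | refl => exact ⟨0, rfl⟩
    | tail _ h ih =>
      obtain ⟨k, hk⟩ := ih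
      exact ⟨k + 1, Or.inr ⟨_, hk, h⟩⟩

theorem exists_encard_reach_le {T : Set (P × J × J)} {s : P → J} {D : ℕ}
    (hD : ∀ p u, {v | (p, u, v) ∈ T}.encard ≤ D) (k : ℕ) :
    ∃ n : ℕ, ∀ p, (Prod.mk p ⁻¹' reach T s k).encard ≤ n := by
  classical
  induction k with
  | zero =>
    refine ⟨1, fun p => ?_⟩
    have : Prod.mk p ⁻¹' reach T s 0 = {s p} := by
      ext v; simp [reach, eq_comm]
    simp [this]
  | succ k ih =>
    obtain ⟨n, hn⟩ := ih
    refine ⟨n + n * D, fun p => ?_⟩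
    have hfin : (Prod.mk p ⁻¹' reach T s k).Finite := finite_of_encard_le_coe (hn p)
    have hT (u : J) : {v | (p, u, v) ∈ T}.Finite := finite_of_encard_le_coe (hD p u)
    let F : Finset J := hfin.toFinset.biUnion fun u => (hT u).toFinset
    have hsub : Prod.mk p ⁻¹' reach T s (k + 1) ⊆ (Prod.mk p ⁻¹' reach T s k) ∪ F := by
      rintro v (hv | ⟨u, hu, huv⟩)
      · exact Or.inl hv
      · refine Or.inr ?_
        simp only [F, Finset.coe_biUnion, mem_iUnion]
        exact ⟨u, by simpa using hu, by simpa using huv⟩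
    have hF : F.card ≤ n * D := by
      refine (Finset.card_biUnion_le_card_mul _ _ D fun u _ => ?_).trans
        (Nat.mul_le_mul_right D ?_)
      · have := hD p u
        rw [(hT u).encard_eq_coe_toFinset_card] at this
        exact_mod_cast this
      · have := hn p
        rw [hfin.encard_eq_coe_toFinset_card] at this
        exact_mod_cast this
    refine (encard_le_encard hsub).trans ((encard_union_le _ _).trans ?_)
    push_cast
    refine add_le_add (hn p) ?_
    rw [encard_coe_eq_coe_finsetCard]
    exact_mod_cast hF

variable [MeasurableSpace P] [StandardBorelSpace P] [MeasurableSpace J] [StandardBorelSpace J]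

theorem measurableSet_reach {T : Set (P × J × J)} {s : P → J} {D : ℕ} (hT : MeasurableSet T)
    (hs : Measurable s) (hD : ∀ p u, {v | (p, u, v) ∈ T}.encard ≤ D) (k : ℕ) :
    MeasurableSet (reach T s k) := by
  induction k with
  | zero => exact measurableSet_eq_fun (hs.comp measurable_fst) measurable_snd
  | succ k ih =>
    obtain ⟨n, hn⟩ := exists_encard_reach_le (s := s) hD k
    let W : Set ((P × J) × J) := {q | (q.1.1, q.2) ∈ reach T s k ∧ (q.1.1, q.2, q.1.2) ∈ T}
    have hW : MeasurableSet W :=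
      ((measurable_fst.fst.prodMk measurable_snd) ih).inter
        ((measurable_fst.fst.prodMk (measurable_snd.prodMk measurable_fst.snd)) hT)
    exact ih.union (measurableSet_exists_of_encard_le hW (n := n) fun q =>
      (encard_le_encard fun u hu => hu.1).trans (hn q.1))

theorem measurable_count_compo {T : Set (P × J × J)} {s : P → J} {D : ℕ} (hT : MeasurableSet T)
    (hs : Measurable s) (hD : ∀ p u, {v | (p, u, v) ∈ T}.encard ≤ D) :
    Measurable fun p => Measure.count (compo (Prod.mk p ⁻¹' T) (s p)) := by
  have h (p : P) : Measure.count (compo (Prod.mk p ⁻¹' T) (s p)) =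
      ⨆ k, Measure.count (Prod.mk p ⁻¹' reach T s k) := by
    rw [← iUnion_reach]
    exact Monotone.measure_iUnion fun i j hij => preimage_mono (reach_mono T s hij)
  simp only [h]
  refine Measurable.iSup fun k => ?_
  obtain ⟨n, hn⟩ := exists_encard_reach_le (s := s) hD k
  exact measurable_count_section n (measurableSet_reach hT hs hD k) hn

end Components

section Trees

variable {J : Type u}

theorem IsForestSet.mono {X Z : Set (J × J)} (hX : IsForestSet X) (h : Z ⊆ X) :
    IsForestSet Z := fun a b hab hpath =>
  hX a b (h hab) (Relation.ReflTransGen.mono (fun _ _ huv => ⟨h huv.1, huv.2⟩) _ _ hpath)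

theorem compo_mono {X Z : Set (J × J)} (h : Z ⊆ X) (x : J) : compo Z x ⊆ compo X x :=
  fun _ hy => Relation.ReflTransGen.mono (fun _ _ huv => h huv) _ _ hy

theorem mem_compo_self (Z : Set (J × J)) (x : J) : x ∈ compo Z x := Relation.ReflTransGen.refl

theorem compo_eq_of_mem {Z : Set (J × J)} (hZ : ∀ x y, (x, y) ∈ Z → (y, x) ∈ Z) {x y : J}
    (hxy : (x, y) ∈ Z) : compo Z x = compo Z y := by
  ext z
  exact ⟨fun h => Relation.ReflTransGen.head (hZ _ _ hxy) h,
    fun h => Relation.ReflTransGen.head hxy h⟩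

theorem iUnion_compo {Z : ℕ → Set (J × J)} (hZ : Monotone Z) (x : J) :
    ⋃ n, compo (Z n) x = compo (⋃ n, Z n) x := by
  apply subset_antisymm
  · exact iUnion_subset fun n => compo_mono (subset_iUnion Z n) x
  · intro y hy
    change Relation.ReflTransGen _ _ _ at hy
    induction hy with
    | refl => exact mem_iUnion.2 ⟨0, mem_compo_self _ _⟩
    | tail _ h ih =>
      obtain ⟨m, hm⟩ := mem_iUnion.1 ih
      obtain ⟨n, hn⟩ := mem_iUnion.1 h
      refine mem_iUnion.2 ⟨max m n, ?_⟩
      exact Relation.ReflTransGen.tail (compo_mono (hZ (le_max_left m n)) x hm)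
        (hZ (le_max_right m n) hn)

/-- For `p = (x, y)`, the vertices reachable from `y` after deleting the vertex `x`. -/
def branch (Z : Set (J × J)) (p : J × J) : Set J :=
  compo {q | q ∈ Z ∧ q.1 ≠ p.1 ∧ q.2 ≠ p.1} p.2

theorem notMem_branch {Z : Set (J × J)} {x y : J} (hxy : y ≠ x) : x ∉ branch Z (x, y) := by
  intro h
  obtain h | ⟨z, -, hz⟩ := Relation.ReflTransGen.cases_tail h
  · exact hxy h.symm
  · exact hz.2.2 rfl

theorem branch_subset_compo {Z : Set (J × J)} {x y : J} (hxy : (x, y) ∈ Z) :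
    branch Z (x, y) ⊆ compo Z x := fun _ hz =>
  Relation.ReflTransGen.head hxy (compo_mono (fun _ hq => hq.1) y hz)

theorem IsForestSet.ne {Z : Set (J × J)} (hF : IsForestSet Z) {x y : J} (hxy : (x, y) ∈ Z) :
    y ≠ x := by
  rintro rfl
  exact hF _ _ hxy Relation.ReflTransGen.refl

theorem compo_eq_insert_biUnion_branch (Z : Set (J × J)) (x : J) :
    compo Z x = {x} ∪ ⋃ y ∈ Prod.mk x ⁻¹' Z, branch Z (x, y) := by
  apply subset_antisymm
  · intro z hz
    change Relation.ReflTransGen _ _ _ at hz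
    induction hz with
    | refl => exact Or.inl rfl
    | @tail z w _ hzw ih =>
      by_cases hwx : w = x
      · exact Or.inl hwx
      refine Or.inr ?_
      simp only [mem_iUnion]
      by_cases hzx : z = x
      · subst hzx
        exact ⟨w, hzw, mem_compo_self _ _⟩
      · simp only [mem_union, mem_singleton_iff, hzx, false_or, mem_iUnion] at ih
        obtain ⟨y, hy, hz⟩ := ih
        exact ⟨y, hy, Relation.ReflTransGen.tail hz ⟨hzw, hzx, hwx⟩⟩
  · refine union_subset (singleton_subset_iff.2 (mem_compo_self _ _)) ?_
    exact iUnion₂_subset fun y hy => branch_subset_compo hy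

theorem branch_symm {Z : Set (J × J)} (hZ : ∀ x y, (x, y) ∈ Z → (y, x) ∈ Z) {x z w : J}
    (h : Relation.ReflTransGen (fun a b => (a, b) ∈ {q | q ∈ Z ∧ q.1 ≠ x ∧ q.2 ≠ x}) z w) :
    Relation.ReflTransGen (fun a b => (a, b) ∈ {q | q ∈ Z ∧ q.1 ≠ x ∧ q.2 ≠ x}) w z := by
  have : Std.Symm (fun a b => (a, b) ∈ {q | q ∈ Z ∧ q.1 ≠ x ∧ q.2 ≠ x}) :=
    ⟨fun a b hab => ⟨hZ _ _ hab.1, hab.2.2, hab.2.1⟩⟩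
  exact Std.Symm.symm _ _ h

theorem IsForestSet.pairwiseDisjoint_branch {Z : Set (J × J)} (hZ : ∀ x y, (x, y) ∈ Z → (y, x) ∈ Z)
    (hF : IsForestSet Z) (x : J) :
    (Prod.mk x ⁻¹' Z).PairwiseDisjoint fun y => branch Z (x, y) := by
  intro y hy y' hy' hne
  refine disjoint_left.2 fun z hz hz' => hF x y hy ?_
  have hpath := Relation.ReflTransGen.trans hz' (branch_symm hZ hz)
  refine Relation.ReflTransGen.head (b := y') ⟨hy', ?_⟩
    (Relation.ReflTransGen.mono (fun a b hab => ⟨hab.1, ?_⟩) _ _ hpath)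
  · rintro (⟨-, h⟩ | ⟨h, -⟩)
    · exact hne h.symm
    · exact hF.ne hy h.symm
  · rintro (⟨h, -⟩ | ⟨-, h⟩)
    · exact hab.2.1 h
    · exact hab.2.2 h

theorem compo_eq_branch_union {Z : Set (J × J)} (hZ : ∀ x y, (x, y) ∈ Z → (y, x) ∈ Z) {x y : J}
    (hxy : (x, y) ∈ Z) (hne : y ≠ x) :
    compo Z x = branch Z (x, y) ∪ branch Z (y, x) := by
  apply subset_antisymm
  · intro z hz
    change Relation.ReflTransGen _ _ _ at hz
    induction hz with
    | refl => exact Or.inr (mem_compo_self _ _)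
    | @tail z w _ hzw ih =>
      by_cases hwx : w = x
      · subst hwx
        exact Or.inr (mem_compo_self _ _)
      by_cases hwy : w = y
      · subst hwy
        exact Or.inl (mem_compo_self _ _)
      obtain hz | hz := ih
      · refine Or.inl (Relation.ReflTransGen.tail hz ⟨hzw, ?_, hwx⟩)
        rintro rfl
        exact notMem_branch hne hz
      · refine Or.inr (Relation.ReflTransGen.tail hz ⟨hzw, ?_, hwy⟩)
        rintro rfl
        exact notMem_branch hne.symm hz
  · refine union_subset (branch_subset_compo hxy) ?_
    rw [compo_eq_of_mem hZ hxy]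
    exact branch_subset_compo (hZ _ _ hxy)

theorem IsForestSet.disjoint_branch {Z : Set (J × J)} (hZ : ∀ x y, (x, y) ∈ Z → (y, x) ∈ Z)
    (hF : IsForestSet Z) {x y : J} (hxy : (x, y) ∈ Z) :
    Disjoint (branch Z (x, y)) (branch Z (y, x)) := by
  refine disjoint_left.2 fun z hz hz' => hF x y hxy ?_
  have h1 := branch_symm hZ hz
  refine Relation.ReflTransGen.trans (Relation.ReflTransGen.mono (fun a b hab => ⟨hab.1, ?_⟩) _ _ hz')
    (Relation.ReflTransGen.mono (fun a b hab => ⟨hab.1, ?_⟩) _ _ h1)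
  · rintro (⟨-, h⟩ | ⟨h, -⟩)
    · exact hab.2.2 h
    · exact hab.2.1 h
  · rintro (⟨h, -⟩ | ⟨-, h⟩)
    · exact hab.2.1 h
    · exact hab.2.2 h

end Trees

section MassTransport

variable {J : Type u} [MeasurableSpace J] (G : Graphing J)

instance : IsProbabilityMeasure G.μ := G.prob

theorem encard_section_le {U : Set (J × J)} (hU : U ⊆ G.edgeSet) (x : J) :
    (Prod.mk x ⁻¹' U).encard ≤ G.D := by
  refine (encard_le_encard (preimage_mono hU)).trans ?_
  have h : (Prod.mk x ⁻¹' G.edgeSet).encard = ({y | G.E x y}.ncard : ℕ∞) :=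
    (G.degFin x).cast_ncard_eq.symm
  rw [h]
  exact_mod_cast G.degBound x

theorem finite_section {U : Set (J × J)} (hU : U ⊆ G.edgeSet) (x : J) :
    (Prod.mk x ⁻¹' U).Finite :=
  finite_of_encard_le_coe (G.encard_section_le hU x)

theorem isEdgeSubset_edgeSet : G.IsEdgeSubset G.edgeSet :=
  ⟨G.measE, fun x y h => G.symm x y h, Subset.rfl⟩

variable [StandardBorelSpace J]

/-- Counting measure on the neighbours of a vertex. -/
noncomputable def edgeKernel : Kernel J J where
  toFun x := Measure.count.restrict (Prod.mk x ⁻¹' G.edgeSet)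
  measurable' := by
    refine Measure.measurable_of_measurable_coe _ fun S hS => ?_
    have h (x : J) : (Measure.count.restrict (Prod.mk x ⁻¹' G.edgeSet)) S =
        Measure.count (Prod.mk x ⁻¹' (Prod.snd ⁻¹' S ∩ G.edgeSet)) := by
      rw [Measure.restrict_apply hS]; rfl
    simp only [h]
    exact measurable_count_section G.D ((measurable_snd hS).inter G.measE)
      (G.encard_section_le inter_subset_right)

theorem edgeKernel_apply (x : J) :
    G.edgeKernel x = Measure.count.restrict (Prod.mk x ⁻¹' G.edgeSet) := rfl

theorem count_section_le {U : Set (J × J)} (hU : U ⊆ G.edgeSet) (x : J) :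
    Measure.count (Prod.mk x ⁻¹' U) ≤ (G.D : ℝ≥0∞) := by
  rw [Measure.count_apply (G.finite_section hU x).measurableSet]
  exact_mod_cast ENat.toENNReal_le.2 (G.encard_section_le hU x)

theorem toReal_count_section {U : Set (J × J)} (hU : U ⊆ G.edgeSet) (x : J) :
    (Measure.count (Prod.mk x ⁻¹' U)).toReal = (Prod.mk x ⁻¹' U).ncard := by
  rw [Measure.count_apply (G.finite_section hU x).measurableSet,
    ← (G.finite_section hU x).cast_ncard_eq]
  simp

instance : IsFiniteKernel G.edgeKernel :=
  ⟨⟨G.D, ENNReal.natCast_lt_top _, fun x => by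
    rw [edgeKernel_apply, Measure.restrict_apply_univ]
    exact G.count_section_le Subset.rfl x⟩⟩

/-- The (unnormalized) edge measure on ordered pairs. -/
noncomputable def edgeMeasure : Measure (J × J) := G.μ ⊗ₘ G.edgeKernel

instance : IsFiniteMeasure G.edgeMeasure :=
  inferInstanceAs (IsFiniteMeasure (G.μ ⊗ₘ G.edgeKernel))

theorem edgeMeasure_apply {U : Set (J × J)} (hU : MeasurableSet U) (hUE : U ⊆ G.edgeSet) :
    G.edgeMeasure U = ∫⁻ x, Measure.count (Prod.mk x ⁻¹' U) ∂G.μ := by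
  rw [edgeMeasure, Measure.compProd_apply hU]
  refine lintegral_congr fun x => ?_
  rw [edgeKernel_apply, Measure.restrict_apply (measurable_prodMk_left hU),
    inter_eq_self_of_subset_left (preimage_mono hUE)]

theorem toReal_edgeMeasure {U : Set (J × J)} (hU : MeasurableSet U) (hUE : U ⊆ G.edgeSet) :
    (G.edgeMeasure U).toReal = ∫ x, (degX U x : ℝ) ∂G.μ := by
  rw [edgeMeasure_apply G hU hUE, ← integral_toReal
    (measurable_count_section G.D hU (G.encard_section_le hUE)).aemeasurable
    (.of_forall fun x => (G.count_section_le hUE x).trans_lt (ENNReal.natCast_lt_top _))]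
  exact integral_congr_ae (.of_forall fun x => G.toReal_count_section hUE x)

theorem toReal_edgeMeasure_prod {A B : Set J} (hA : MeasurableSet A) (hB : MeasurableSet B) :
    (G.edgeMeasure (A ×ˢ B)).toReal = ∫ x in A, (({y ∈ B | G.E x y}).ncard : ℝ) ∂G.μ := by
  let U : Set (J × J) := Prod.snd ⁻¹' B ∩ G.edgeSet
  have hU : MeasurableSet U := (measurable_snd hB).inter G.measE
  have hUE : U ⊆ G.edgeSet := inter_subset_right
  have h (x : J) : G.edgeKernel x B = Measure.count (Prod.mk x ⁻¹' U) := by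
    rw [edgeKernel_apply, Measure.restrict_apply hB]; rfl
  rw [edgeMeasure, Measure.compProd_apply_prod hA hB]
  simp only [h]
  rw [← integral_toReal
    (measurable_count_section G.D hU (G.encard_section_le hUE)).aemeasurable
    (.of_forall fun x => (G.count_section_le hUE x).trans_lt (ENNReal.natCast_lt_top _))]
  exact integral_congr_ae (.of_forall fun x => G.toReal_count_section hUE x)

/-- The mass transport principle. -/
theorem map_swap_edgeMeasure : G.edgeMeasure.map Prod.swap = G.edgeMeasure := by
  refine Measure.ext_prod fun {A B} hA hB => ?_
  rw [Measure.map_apply measurable_swap (hA.prod hB), preimage_swap_prod,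
    ← ENNReal.toReal_eq_toReal_iff' (measure_ne_top _ _) (measure_ne_top _ _),
    G.toReal_edgeMeasure_prod hB hA, G.toReal_edgeMeasure_prod hA hB]
  exact G.mp B A hB hA

theorem lintegral_swap_edgeMeasure {g : J × J → ℝ≥0∞} (hg : Measurable g) :
    ∫⁻ p, g p.swap ∂G.edgeMeasure = ∫⁻ p, g p ∂G.edgeMeasure := by
  conv_rhs => rw [← G.map_swap_edgeMeasure, lintegral_map hg measurable_swap]

theorem ae_forall_adj {p : J → Prop} (hp : ∀ᵐ x ∂G.μ, p x) :
    ∀ᵐ x ∂G.μ, ∀ y, G.E x y → p y := by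
  let N : Set J := toMeasurable G.μ {x | ¬ p x}
  have hN : MeasurableSet N := measurableSet_toMeasurable _ _
  have hN0 : G.μ N = 0 := by rw [measure_toMeasurable]; exact hp
  have h1 : G.edgeMeasure (N ×ˢ univ) = 0 := by
    rw [edgeMeasure, Measure.compProd_apply_prod hN .univ, Measure.restrict_eq_zero.2 hN0,
      lintegral_zero_measure]
  have h2 : G.edgeMeasure (univ ×ˢ N) = 0 := by
    rw [← G.map_swap_edgeMeasure, Measure.map_apply measurable_swap (MeasurableSet.univ.prod hN),
      preimage_swap_prod, h1]
  have h3 : ∀ᵐ q ∂(G.μ ⊗ₘ G.edgeKernel), p q.2 := by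
    refine measure_mono_null ?_ h2
    intro q hq
    exact ⟨trivial, subset_toMeasurable _ _ hq⟩
  filter_upwards [Measure.ae_ae_of_ae_compProd h3] with x hx y hy
  have h4 : MeasurableSet (Prod.mk x ⁻¹' G.edgeSet) := measurable_prodMk_left G.measE
  rw [edgeKernel_apply, ae_restrict_iff' h4, Measure.ae_count_iff] at hx
  exact hx y hy

theorem ae_forall_mem_compo {p : J → Prop} (hp : ∀ᵐ x ∂G.μ, p x) :
    ∀ᵐ x ∂G.μ, ∀ y ∈ compo G.edgeSet x, p y := by
  have h (k : ℕ) : ∀ᵐ x ∂G.μ, ∀ y,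
      (x, y) ∈ reach (Prod.snd ⁻¹' G.edgeSet : Set (J × J × J)) id k → p y := by
    induction k generalizing p with
    | zero =>
      filter_upwards [hp] with x hx y hy
      obtain rfl : x = y := hy
      exact hx
    | succ k ih =>
      filter_upwards [ih hp, ih (G.ae_forall_adj hp)] with x hx hx' y hy
      obtain hy | ⟨u, hu, huy⟩ := hy
      · exact hx y hy
      · exact hx' u hu y huy
  filter_upwards [ae_all_iff.2 h] with x hx y hy
  have hy' : y ∈ ⋃ k, Prod.mk x ⁻¹' reach (Prod.snd ⁻¹' G.edgeSet : Set (J × J × J)) id k := by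
    rw [iUnion_reach]; exact hy
  obtain ⟨k, hk⟩ := mem_iUnion.1 hy'
  exact hx k y hk

end MassTransport

section Rank

variable {J : Type u} [MeasurableSpace J] [StandardBorelSpace J] (G : Graphing J)

theorem measurable_count_compo_edgeSubset {U : Set (J × J)} (hU : MeasurableSet U)
    (hUE : U ⊆ G.edgeSet) : Measurable fun x => Measure.count (compo U x) :=
  measurable_count_compo (T := Prod.snd ⁻¹' U) (s := id) (measurable_snd hU) measurable_id
    fun _ u => G.encard_section_le hUE u

theorem measurable_count_branch {U : Set (J × J)} (hU : MeasurableSet U)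
    (hUE : U ⊆ G.edgeSet) : Measurable fun p => Measure.count (branch U p) := by
  let T : Set ((J × J) × J × J) := {t | t.2 ∈ U ∧ t.2.1 ≠ t.1.1 ∧ t.2.2 ≠ t.1.1}
  have hT : MeasurableSet T := (measurable_snd hU).inter
    ((measurableSet_eq_fun measurable_snd.fst measurable_fst.fst).compl.inter
      (measurableSet_eq_fun measurable_snd.snd measurable_fst.fst).compl)
  exact measurable_count_compo (T := T) (s := Prod.snd) hT measurable_snd
    fun _ u => (encard_le_encard fun _ hv => hv.1).trans (G.encard_section_le hUE u)

theorem edgeMeasure_add_of_finite {Z : Set (J × J)} (hZ : G.IsEdgeSubset Z)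
    (hF : IsForestSet Z) (hfin : ∀ x, (compo Z x).Finite) :
    G.edgeMeasure Z + 2 * ∫⁻ x, (Measure.count (compo Z x))⁻¹ ∂G.μ = 2 := by
  obtain ⟨hZm, hZs, hZE⟩ := hZ
  set c : J → ℝ≥0∞ := fun x => (Measure.count (compo Z x))⁻¹ with hc
  have hcm : Measurable c := (G.measurable_count_compo_edgeSubset hZm hZE).inv
  have hcancel (x : J) : Measure.count (compo Z x) * c x = 1 :=
    ENNReal.mul_inv_cancel (Measure.count_ne_zero_iff.2 ⟨x, mem_compo_self Z x⟩)
      (Measure.count_apply_lt_top.2 (hfin x)).ne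
  let f : J × J → ℝ≥0∞ := fun p => Measure.count (branch Z p) * c p.1
  have hf : Measurable f := (G.measurable_count_branch hZm hZE).mul (hcm.comp measurable_fst)
  let g : J × J → ℝ≥0∞ := Z.indicator f
  have hg : Measurable g := hf.indicator hZm
  have hbranch {x y : J} (h : (x, y) ∈ Z) : MeasurableSet (branch Z (x, y)) :=
    ((hfin x).subset (branch_subset_compo h)).measurableSet
  have hpair (p : J × J) : g p + g p.swap = Z.indicator 1 p := by
    obtain ⟨x, y⟩ := p
    by_cases h : (x, y) ∈ Z
    · have h' := hZs _ _ h
      simp only [g, Prod.swap_prod_mk, indicator_of_mem h, indicator_of_mem h', f,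
        Pi.one_apply]
      have hcc : c y = c x := by simp only [hc, compo_eq_of_mem hZs h]
      rw [hcc, ← add_mul, ← measure_union (hF.disjoint_branch hZs h) (hbranch h'),
        ← compo_eq_branch_union hZs h (hF.ne h), hcancel]
    · have h' : (y, x) ∉ Z := fun h' => h (hZs _ _ h')
      simp [g, h, h']
  have hsum : G.edgeMeasure Z = 2 * ∫⁻ p, g p ∂G.edgeMeasure := by
    rw [← lintegral_indicator_one hZm, ← lintegral_congr hpair, lintegral_add_left hg,
      G.lintegral_swap_edgeMeasure hg, two_mul]
  have hfiber (x : J) : ∫⁻ y, g (x, y) ∂G.edgeKernel x + c x = 1 := by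
    have hsec : MeasurableSet (Prod.mk x ⁻¹' Z) := measurable_prodMk_left hZm
    have hind : (fun y => g (x, y)) = (Prod.mk x ⁻¹' Z).indicator fun y => f (x, y) := rfl
    have hcount : (Prod.mk x ⁻¹' Z).Countable := (G.finite_section hZE x).countable
    rw [hind, lintegral_indicator hsec, edgeKernel_apply, Measure.restrict_restrict hsec,
      inter_eq_self_of_subset_left (preimage_mono hZE), lintegral_countable _ hcount]
    simp only [Measure.count_singleton, mul_one, f]
    have hx : Disjoint {x} (⋃ y ∈ Prod.mk x ⁻¹' Z, branch Z (x, y)) := by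
      simp only [disjoint_singleton_left, mem_iUnion, not_exists]
      exact fun y hy => notMem_branch (hF.ne hy)
    rw [ENNReal.tsum_mul_right, ← measure_biUnion hcount (hF.pairwiseDisjoint_branch hZs x)
      fun y hy => hbranch hy]
    have htot := hcancel x
    rw [compo_eq_insert_biUnion_branch Z x, measure_union' hx (measurableSet_singleton x),
      Measure.count_singleton, add_mul, one_mul, add_comm] at htot
    exact htot
  rw [hsum, ← mul_add, edgeMeasure, Measure.lintegral_compProd hg, ← lintegral_add_right _ hcm]
  simp [hfiber]

theorem integral_one_div_natCard_compo {U : Set (J × J)} (hU : MeasurableSet U)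
    (hUE : U ⊆ G.edgeSet) :
    ∫ x, (1 : ℝ) / (Nat.card ↥(compo U x)) ∂G.μ =
      (∫⁻ x, (Measure.count (compo U x))⁻¹ ∂G.μ).toReal := by
  have hm : Measurable fun x => (Measure.count (compo U x))⁻¹ :=
    (G.measurable_count_compo_edgeSubset hU hUE).inv
  have hne (x : J) : Measure.count (compo U x) ≠ 0 :=
    Measure.count_ne_zero_iff.2 ⟨x, mem_compo_self U x⟩
  rw [← integral_toReal hm.aemeasurable
    (.of_forall fun x => ENNReal.inv_lt_top.2 (pos_iff_ne_zero.2 (hne x)))]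
  refine integral_congr_ae (.of_forall fun x => ?_)
  by_cases h : (compo U x).Finite
  · simp [Measure.count_apply h.measurableSet, ← h.cast_ncard_eq, Nat.card_coe_set_eq]
  · have htop : Measure.count (compo U x) = ∞ := by
      by_contra h'
      exact h (Measure.count_apply_lt_top.1 (lt_top_iff_ne_top.2 h'))
    have h0 : Nat.card ↥(compo U x) = 0 := by
      rw [Nat.card_coe_set_eq]; exact Set.Infinite.ncard h
    simp [htop, h0]

theorem ae_compo_diff_eq {U N : Set (J × J)} (hUE : U ⊆ G.edgeSet) (hN : MeasurableSet N)
    (hNE : N ⊆ G.edgeSet) (hN0 : G.edgeMeasure N = 0) :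
    ∀ᵐ x ∂G.μ, compo (U \ N) x = compo U x := by
  rw [edgeMeasure_apply G hN hNE, lintegral_eq_zero_iff
    (measurable_count_section G.D hN (G.encard_section_le hNE))] at hN0
  have h : ∀ᵐ x ∂G.μ, ∀ y, (x, y) ∉ N := by
    filter_upwards [hN0] with x hx y hy
    exact (Measure.count_ne_zero_iff.2 ⟨y, hy⟩) hx
  filter_upwards [G.ae_forall_mem_compo h] with x hx
  refine subset_antisymm (compo_mono sdiff_subset x) fun y hy => ?_
  change Relation.ReflTransGen _ _ _ at hy
  induction hy with
  | refl => exact mem_compo_self _ _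
  | @tail u v hu huv ih =>
    exact Relation.ReflTransGen.tail ih ⟨huv, hx u (compo_mono hUE x hu) v⟩

theorem Hyperfinite.exists_seq (hH : G.Hyperfinite) :
    ∃ X : ℕ → Set (J × J), (∀ n, G.IsEdgeSubset (X n)) ∧
      (∀ n x, (compo (G.edgeSet \ X n) x).Finite) ∧ ∑' n, G.edgeMeasure (X n) ≠ ∞ := by
  choose X hX hlt hfin using fun n : ℕ => hH ((1 / 2) ^ n) (by positivity)
  refine ⟨X, hX, hfin, ?_⟩
  have hreal (n : ℕ) : (G.edgeMeasure (X n)).toReal ≤ (1 / 2) ^ n * G.avgDeg := by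
    have hd : (G.edgeMeasure G.edgeSet).toReal = G.avgDeg :=
      G.toReal_edgeMeasure G.measE Subset.rfl
    have hle : (G.edgeMeasure (X n)).toReal ≤ G.avgDeg := by
      rw [← hd]
      exact ENNReal.toReal_mono (measure_ne_top _ _) (measure_mono (hX n).2.2)
    have hpos : 0 ≤ G.avgDeg := ENNReal.toReal_nonneg.trans hle
    obtain h0 | h0 := hpos.eq_or_lt
    · rw [← h0, mul_zero]
      exact hle.trans h0.ge
    · have h := hlt n
      rw [eta, div_lt_iff₀ h0, ← G.toReal_edgeMeasure (hX n).1 (hX n).2.2] at h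
      exact h.le
  have hsum : Summable fun n => (G.edgeMeasure (X n)).toReal :=
    Summable.of_nonneg_of_le (fun _ => ENNReal.toReal_nonneg) hreal
      (summable_geometric_two.mul_right _)
  have h := hsum.tsum_ofReal_ne_top
  simpa only [ENNReal.ofReal_toReal (measure_ne_top G.edgeMeasure _)] using h

theorem edgeMeasure_add_of_hyperfinite (hH : G.Hyperfinite) (hF : G.IsForest)
    {U : Set (J × J)} (hU : G.IsEdgeSubset U) :
    G.edgeMeasure U + 2 * ∫⁻ x, (Measure.count (compo U x))⁻¹ ∂G.μ = 2 := by
  obtain ⟨X, hX, hfin, hsum⟩ := hH.exists_seq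
  obtain ⟨hUm, hUs, hUE⟩ := hU
  let Y : ℕ → Set (J × J) := fun n => ⋃ m ≥ n, X m
  let N : Set (J × J) := ⋂ n, Y n
  have hYm (n : ℕ) : MeasurableSet (Y n) :=
    MeasurableSet.iUnion fun m => MeasurableSet.iUnion fun _ => (hX m).1
  have hNm : MeasurableSet N := MeasurableSet.iInter hYm
  have hNE : N ⊆ G.edgeSet := (iInter_subset Y 0).trans
    (iUnion₂_subset fun m _ => (hX m).2.2)
  have hN0 : G.edgeMeasure N = 0 := by
    have h := measure_limsup_atTop_eq_zero hsum
    rwa [limsup_eq_iInf_iSup_of_nat] at h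
  let Z : ℕ → Set (J × J) := fun n => U \ Y n
  have hZmono : Monotone Z := fun m n hmn => sdiff_subset_sdiff_right
    (biUnion_mono (fun k (hk : n ≤ k) => hmn.trans hk) fun _ _ => Subset.rfl)
  have hZU : ⋃ n, Z n = U \ N := (sdiff_iInter U Y).symm
  have hZ (n : ℕ) : G.IsEdgeSubset (Z n) := by
    refine ⟨hUm.diff (hYm n), ?_, sdiff_subset.trans hUE⟩
    rintro x y ⟨hxy, hn⟩
    refine ⟨hUs _ _ hxy, fun h => hn ?_⟩
    simp only [Y, mem_iUnion] at h ⊢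
    obtain ⟨m, hm, h⟩ := h
    exact ⟨m, hm, (hX m).2.1 _ _ h⟩
  have hZfin (n : ℕ) (x : J) : (compo (Z n) x).Finite :=
    (hfin n x).subset (compo_mono (sdiff_subset_sdiff hUE
      (subset_biUnion_of_mem (u := X) (le_refl n))) x)
  have hstep (n : ℕ) := G.edgeMeasure_add_of_finite (hZ n)
    (IsForestSet.mono hF (hZ n).2.2) (hZfin n)
  have hlim1 : Tendsto (fun n => G.edgeMeasure (Z n)) atTop (nhds (G.edgeMeasure U)) := by
    have h := tendsto_measure_iUnion_atTop (μ := G.edgeMeasure) hZmono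
    rwa [hZU, measure_sdiff_null hN0] at h
  have hlim2 : Tendsto (fun n => ∫⁻ x, (Measure.count (compo (Z n) x))⁻¹ ∂G.μ) atTop
      (nhds (∫⁻ x, (Measure.count (compo U x))⁻¹ ∂G.μ)) := by
    refine lintegral_tendsto_of_tendsto_of_antitone
      (fun n => (G.measurable_count_compo_edgeSubset (hZ n).1 (hZ n).2.2).inv.aemeasurable)
      (.of_forall fun x m n hmn => ENNReal.inv_le_inv.2
        (measure_mono (compo_mono (hZmono hmn) x))) ?_ ?_
    · intro h
      have h0 := hstep 0
      rw [h] at h0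
      simp at h0
    · filter_upwards [G.ae_compo_diff_eq hUE hNm hNE hN0] with x hx
      rw [← hx, ← hZU, ← iUnion_compo hZmono x]
      exact tendsto_inv_iff.2 (tendsto_measure_iUnion_atTop fun m n hmn =>
        compo_mono (hZmono hmn) x)
  have hlim := hlim1.add (ENNReal.Tendsto.const_mul hlim2 (Or.inr ENNReal.ofNat_ne_top) (a := 2))
  simp only [hstep] at hlim
  exact tendsto_nhds_unique hlim tendsto_const_nhds

theorem rho_eq_half_integral_degX (hH : G.Hyperfinite) (hF : G.IsForest) {U : Set (J × J)}
    (hU : G.IsEdgeSubset U) : G.rho U = (∫ x, (degX U x : ℝ) ∂G.μ) / 2 := by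
  have h := G.edgeMeasure_add_of_hyperfinite hH hF hU
  have hne : 2 * ∫⁻ x, (Measure.count (compo U x))⁻¹ ∂G.μ ≠ ∞ := fun htop => by
    rw [htop] at h
    simp at h
  have hreal := congrArg ENNReal.toReal h
  rw [ENNReal.toReal_add (measure_ne_top _ _) hne, ENNReal.toReal_mul,
    G.toReal_edgeMeasure hU.1 hU.2.2, ENNReal.toReal_ofNat] at hreal
  rw [rho, G.integral_one_div_natCard_compo hU.1 hU.2.2]
  linarith

end Rank

end Graphing

/-- For a hyperfinite graphing `G` all of whose connected components
are trees, `ρ(U) = (d̄/2)·η(U)` for every Borel edge set `U ⊆ E`; in particular `ρ` is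
(countably) additive on Borel subsets of `E` and `ρ(E) = d̄/2`. -/
theorem Graphing.rho_eq_of_hyperfinite_forest {J : Type*} [MeasurableSpace J]
    [StandardBorelSpace J] (G : Graphing J) (hH : G.Hyperfinite) (hF : G.IsForest) :
    (∀ U : Set (J × J), G.IsEdgeSubset U → G.rho U = (G.avgDeg / 2) * G.eta U) ∧
    G.rho G.edgeSet = G.avgDeg / 2 := by
  refine ⟨fun U hU => ?_, G.rho_eq_half_integral_degX hH hF G.isEdgeSubset_edgeSet⟩
  rw [G.rho_eq_half_integral_degX hH hF hU, eta]
  have hle : (∫ x, (degX U x : ℝ) ∂G.μ) ≤ G.avgDeg := by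
    rw [← G.toReal_edgeMeasure hU.1 hU.2.2,
      show G.avgDeg = (G.edgeMeasure G.edgeSet).toReal from
        (G.toReal_edgeMeasure G.measE subset_rfl).symm]
    exact ENNReal.toReal_mono (measure_ne_top _ _) (measure_mono hU.2.2)
  have hnonneg : 0 ≤ ∫ x, (degX U x : ℝ) ∂G.μ := integral_nonneg fun _ => Nat.cast_nonneg _
  obtain h0 | h0 := eq_or_ne G.avgDeg 0
  · rw [h0] at hle ⊢
    rw [le_antisymm hle hnonneg]
    simp
  · field_simp
end
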